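/- Let Λ̃₁ = U₁ᵀ B V₁, where U₁ and V₁ are the first columns of U and V. Then the statistic S_{1,Λ̃₁} = (∫_{d₁}^{∞} e^{−(z−Λ̃₁)²/(2σ²)} z^{N−p} ∏_{j=2}^{p} (z² − d_j²) dz) / (∫_{d₂}^{∞} e^{−(z−Λ̃₁)²/(2σ²)} z^{N−p} ∏_{j=2}^{p} (z² − d_j²) dz) is uniformly distributed on (0,1). -/

import Mathlib

/-!
Splitting off its dominant singular pair writes a generic matrix as `s • (1, x) (1, y)ᵀ` plus a
remainder whose columns are orthogonal to `(1, x)` and whose rows are orthogonal to `(1, y)`. This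
is a polar-type chart in which `|s|` is the largest singular value `d₁` up to a factor depending on
`x` and `y`. The spectrum of `YᵀY` away from `d₁²` is that of the remainder, so the Jacobian
determinant of the chart factors as a function of the other coordinates times
`d₁ ^ (N - p) * ∏ j ≥ 2, (d₁ ^ 2 - d_j ^ 2)`, and the Gaussian density depends on `d₁` only through
`exp (-(d₁ - Λ̃₁) ^ 2 / (2 * σ ^ 2))`. Hence, given the other coordinates and the sign of `s`, the
law of `d₁` has on `(d₂, ∞)` a density proportional to the integrand of the statistic, and the
statistic is the survival function of this law at `d₁`. The matrices without a simple largest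
singular value, or whose top singular vectors have a vanishing leading entry, form a null set.
-/

open MeasureTheory ProbabilityTheory Matrix

namespace KacRice

open Set Filter Topology ENNReal NNReal

section TailRatio

/-- The ratio `∫_t^∞ w / ∫_r^∞ w`: the survival function at `t` of the law on `(r, ∞)` with density
proportional to `w`. -/
noncomputable def tailRatio (w : ℝ → ℝ) (r t : ℝ) : ℝ := (∫ z in Ioi t, w z) / ∫ z in Ioi r, w z

variable {w : ℝ → ℝ} {r : ℝ}

lemma hasDerivAt_integral_Ioi (hc : Continuous w) (hi : Integrable w) (t : ℝ) :
    HasDerivAt (fun c ↦ ∫ z in Ioi c, w z) (-w t) t := by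
  have split : (fun c ↦ ∫ z in Ioi c, w z) =
      fun c ↦ (∫ z in Ioi 0, w z) - ∫ z in (0 : ℝ)..c, w z := by
    ext c
    rw [← intervalIntegral.integral_interval_add_Ioi (a := 0) (b := c) hi.integrableOn
      hi.integrableOn, add_sub_cancel_left]
  rw [split]
  exact (hc.integral_hasStrictDerivAt 0 t).hasDerivAt.const_sub _

lemma strictAntiOn_integral_Ioi (hc : Continuous w) (hi : Integrable w)
    (hw : ∀ z ∈ Ioi r, 0 < w z) :
    StrictAntiOn (fun c ↦ ∫ z in Ioi c, w z) (Ici r) := by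
  refine strictAntiOn_of_deriv_neg (convex_Ici r)
    (fun t _ ↦ (hasDerivAt_integral_Ioi hc hi t).continuousAt.continuousWithinAt) fun t ht ↦ ?_
  rw [interior_Ici] at ht
  rw [(hasDerivAt_integral_Ioi hc hi t).deriv]
  exact neg_neg_of_pos (hw t ht)

lemma integral_Ioi_pos (hi : Integrable w) (hw : ∀ z ∈ Ioi r, 0 < w z) :
    0 < ∫ z in Ioi r, w z := by
  rw [setIntegral_pos_iff_support_of_nonneg_ae
    (ae_restrict_of_forall_mem measurableSet_Ioi fun z hz ↦ (hw z hz).le) hi.integrableOn,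
    inter_eq_right.2 fun z hz ↦ Function.mem_support.2 (hw z hz).ne', Real.volume_Ioi]
  exact zero_lt_top

lemma bijOn_tailRatio (hc : Continuous w) (hi : Integrable w) (hw : ∀ z ∈ Ioi r, 0 < w z) :
    BijOn (tailRatio w r) (Ioi r) (Ioo 0 1) := by
  have hr : 0 < ∫ z in Ioi r, w z := integral_Ioi_pos hi hw
  have anti := strictAntiOn_integral_Ioi hc hi hw
  refine ⟨fun t ht ↦ ⟨?_, ?_⟩, fun t ht t' ht' h ↦ ?_, fun u hu ↦ ?_⟩
  · exact div_pos (integral_Ioi_pos hi fun z hz ↦ hw z (Ioi_subset_Ioi (mem_Ioi.1 ht).le hz)) hr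
  · exact (div_lt_one hr).2 (anti self_mem_Ici (Ioi_subset_Ici_self ht) ht)
  · exact anti.injOn (Ioi_subset_Ici_self ht) (Ioi_subset_Ici_self ht')
      ((div_left_inj' hr.ne').1 h)
  · have lim : Tendsto (fun c ↦ ∫ z in Ioi c, w z) atTop (𝓝 0) :=
      tendsto_integral_Ioi_zero tendsto_id
    obtain ⟨c, hcu, hrc⟩ :=
      ((lim.eventually_lt_const (mul_pos hu.1 hr)).and (eventually_ge_atTop r)).exists
    have hur : u * (∫ z in Ioi r, w z) < ∫ z in Ioi r, w z := mul_lt_of_lt_one_left hr hu.2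
    obtain ⟨t, ht, htu⟩ := intermediate_value_Icc' hrc
      (fun t _ ↦ (hasDerivAt_integral_Ioi hc hi t).continuousAt.continuousWithinAt)
      ⟨hcu.le, hur.le⟩
    refine ⟨t, ht.1.lt_of_ne ?_, (div_eq_iff hr.ne').2 htu⟩
    rintro rfl
    exact hur.ne' htu

lemma lintegral_Ioi_comp_tailRatio (hc : Continuous w) (hi : Integrable w)
    (hw : ∀ z ∈ Ioi r, 0 < w z) (g : ℝ → ℝ≥0∞) :
    ∫⁻ t in Ioi r, ENNReal.ofReal (w t) * g (tailRatio w r t) =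
      ENNReal.ofReal (∫ z in Ioi r, w z) * ∫⁻ u in Ioo 0 1, g u := by
  have hr : 0 < ∫ z in Ioi r, w z := integral_Ioi_pos hi hw
  have bij := bijOn_tailRatio hc hi hw
  have deriv (t : ℝ) : HasDerivAt (tailRatio w r) (-w t / ∫ z in Ioi r, w z) t :=
    (hasDerivAt_integral_Ioi hc hi t).div_const _
  rw [← bij.image_eq, lintegral_image_eq_lintegral_abs_deriv_mul measurableSet_Ioi
      (fun t _ ↦ (deriv t).hasDerivWithinAt) bij.injOn,
    ← lintegral_const_mul' _ _ ofReal_ne_top]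
  refine setLIntegral_congr_fun measurableSet_Ioi fun t ht ↦ ?_
  rw [← mul_assoc, ← ENNReal.ofReal_mul hr.le, abs_div, abs_neg, abs_of_pos hr,
    abs_of_pos (hw t ht), mul_div_cancel₀ _ hr.ne']

end TailRatio

lemma setLIntegral_comp_mul_left {κ : ℝ} (hκ : κ ≠ 0) (S : Set ℝ) (f : ℝ → ℝ≥0∞) :
    ∫⁻ s in (κ * ·) ⁻¹' S, f (κ * s) = ENNReal.ofReal |κ⁻¹| * ∫⁻ t in S, f t := by
  have emb : MeasurableEmbedding (κ * · : ℝ → ℝ) := (Homeomorph.mulLeft₀ κ hκ).measurableEmbedding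
  rw [← emb.lintegral_map, ← emb.restrict_map, Real.map_volume_mul_left hκ, Measure.restrict_smul,
    lintegral_smul_measure, smul_eq_mul]

lemma setLIntegral_sign_mul_abs {κ r : ℝ} (hκ : 0 < κ) (hr : 0 ≤ r) (f : ℝ → ℝ → ℝ≥0∞) :
    ∫⁻ s in {s | r < κ * |s|}, f (SignType.sign s) (κ * |s|) =
      ENNReal.ofReal κ⁻¹ * ∑ ε ∈ {1, -1}, ∫⁻ t in Ioi r, f ε t := by
  have union : {s | r < κ * |s|} = (κ * ·) ⁻¹' Ioi r ∪ (-κ * ·) ⁻¹' Ioi r := by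
    ext s
    rcases abs_cases s with ⟨hs, hs'⟩ | ⟨hs, hs'⟩ <;>
      simp only [mem_ofPred_eq, mem_union, mem_preimage, mem_Ioi, hs] <;>
      constructor <;> intro h
    · exact Or.inl h
    · rcases h with h | h
      · exact h
      · nlinarith
    · exact Or.inr (by linarith)
    · rcases h with h | h
      · nlinarith
      · linarith
  have disj : Disjoint ((κ * ·) ⁻¹' Ioi r) ((-κ * ·) ⁻¹' Ioi r) :=
    disjoint_left.2 fun s (h : r < κ * s) (h' : r < -κ * s) ↦ by linarith
  have meas (c : ℝ) : MeasurableSet ((c * ·) ⁻¹' Ioi r) :=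
    (measurable_const_mul c) measurableSet_Ioi
  have branch_pos : ∫⁻ s in (κ * ·) ⁻¹' Ioi r, f (SignType.sign s) (κ * |s|) =
      ∫⁻ s in (κ * ·) ⁻¹' Ioi r, f 1 (κ * s) := by
    refine setLIntegral_congr_fun (meas κ) fun s (hs : r < κ * s) ↦ ?_
    have hs0 : 0 < s := pos_of_mul_pos_right (hr.trans_lt hs) hκ.le
    simp [sign_pos hs0, abs_of_pos hs0]
  have branch_neg : ∫⁻ s in (-κ * ·) ⁻¹' Ioi r, f (SignType.sign s) (κ * |s|) =
      ∫⁻ s in (-κ * ·) ⁻¹' Ioi r, f (-1) (-κ * s) := by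
    refine setLIntegral_congr_fun (meas (-κ)) fun s (hs : r < -κ * s) ↦ ?_
    have hs0 : s < 0 := by
      by_contra! h
      nlinarith
    simp [sign_neg hs0, abs_of_neg hs0]
  rw [union, lintegral_union (meas _) disj, branch_pos, branch_neg,
    setLIntegral_comp_mul_left hκ.ne',
    setLIntegral_comp_mul_left (neg_ne_zero.2 hκ.ne'),
    inv_neg, abs_neg, abs_of_pos (inv_pos.2 hκ),
    Finset.sum_pair (by norm_num), mul_add]

section Gaussian

lemma integrable_polynomial_mul_exp_neg_mul_sq {c : ℝ} (hc : 0 < c) (Q : Polynomial ℝ) :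
    Integrable fun z : ℝ ↦ Q.eval z * Real.exp (-c * z ^ 2) := by
  induction Q using Polynomial.induction_on' with
  | add Q R hQ hR =>
    simp only [Polynomial.eval_add, add_mul]
    exact hQ.add hR
  | monomial n a =>
    have moment : Integrable fun z : ℝ ↦ z ^ n * Real.exp (-c * z ^ 2) := by
      simpa only [Real.rpow_natCast] using
        integrable_rpow_mul_exp_neg_mul_sq hc (s := n) (by linarith [n.cast_nonneg (α := ℝ)])
    simpa only [Polynomial.eval_monomial, mul_assoc] using moment.const_mul a

/-- The weight `e^{-(z-l)²/(2σ²)} z^k Q(z²)` whose tails form the Kac–Rice statistic. The polynomial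
`Q` is evaluated at `z²` because it will be the characteristic polynomial of a Gram matrix. -/
noncomputable def kacRiceWeight (σ l : ℝ) (k : ℕ) (Q : Polynomial ℝ) (z : ℝ) : ℝ :=
  Real.exp (-(z - l) ^ 2 / (2 * σ ^ 2)) * z ^ k * Q.eval (z ^ 2)

lemma continuous_kacRiceWeight (σ l : ℝ) (k : ℕ) (Q : Polynomial ℝ) :
    Continuous (kacRiceWeight σ l k Q) := by
  unfold kacRiceWeight
  fun_prop

lemma integrable_kacRiceWeight {σ : ℝ} (hσ : 0 < σ) (l : ℝ) (k : ℕ) (Q : Polynomial ℝ) :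
    Integrable (kacRiceWeight σ l k Q) := by
  let R : Polynomial ℝ := (.X ^ k * Q.comp (.X ^ 2)).comp (.X + .C l)
  convert (integrable_polynomial_mul_exp_neg_mul_sq (c := (2 * σ ^ 2)⁻¹) (by positivity)
    R).comp_sub_right l using 2 with z
  simp only [kacRiceWeight, R, Polynomial.eval_comp, Polynomial.eval_mul, Polynomial.eval_pow,
    Polynomial.eval_X, Polynomial.eval_add, Polynomial.eval_C, sub_add_cancel, div_eq_inv_mul]
  rw [mul_neg, neg_mul]
  ring

lemma pi_withDensity_ofReal {ι : Type*} [Fintype ι] {X : ι → Type*} [∀ i, MeasurableSpace (X i)]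
    (μ : ∀ i, Measure (X i)) [∀ i, SigmaFinite (μ i)] {f : ∀ i, X i → ℝ}
    (hf : ∀ i, Integrable (f i) (μ i)) (hf0 : ∀ i x, 0 ≤ f i x) :
    Measure.pi (fun i ↦ (μ i).withDensity fun x ↦ ENNReal.ofReal (f i x)) =
      (Measure.pi μ).withDensity fun x ↦ ENNReal.ofReal (∏ i, f i (x i)) := by
  have (i : ι) : IsFiniteMeasure ((μ i).withDensity fun x ↦ ENNReal.ofReal (f i x)) :=
    isFiniteMeasure_withDensity_ofReal (hf i).2
  refine Measure.pi_eq fun S hS ↦ ?_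
  have rect (i : ι) : (μ i).withDensity (fun x ↦ ENNReal.ofReal (f i x)) (S i) =
      ENNReal.ofReal (∫ x in S i, f i x ∂μ i) := by
    rw [withDensity_apply _ (hS i),
      ofReal_integral_eq_lintegral_ofReal (hf i).integrableOn (ae_of_all _ (hf0 i))]
  have int_rect : Integrable (fun x : ∀ i, X i ↦ ∏ i, f i (x i))
      (Measure.pi fun i ↦ (μ i).restrict (S i)) :=
    Integrable.fintype_prod_dep fun i ↦ (hf i).integrableOn
  rw [withDensity_apply _ (MeasurableSet.univ_pi hS), Measure.restrict_pi_pi,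
    ← ofReal_integral_eq_lintegral_ofReal int_rect
      (ae_of_all _ fun x ↦ Finset.prod_nonneg fun i _ ↦ hf0 i (x i)),
    integral_fintype_prod_eq_prod, ENNReal.ofReal_prod_of_nonneg
      fun i _ ↦ integral_nonneg (hf0 i)]
  simp only [rect]

lemma pi_gaussianReal_eq_withDensity {ι : Type*} [Fintype ι] (m : ι → ℝ) {v : ℝ≥0} (hv : v ≠ 0) :
    Measure.pi (fun i ↦ gaussianReal (m i) v) =
      volume.withDensity fun x ↦ ENNReal.ofReal (∏ i, gaussianPDFReal (m i) v (x i)) := by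
  simp only [gaussianReal_of_var_ne_zero _ hv]
  exact pi_withDensity_ofReal (fun _ ↦ volume) (fun i ↦ integrable_gaussianPDFReal (m i) v)
    fun i ↦ gaussianPDFReal_nonneg (m i) v

/-- The (unnormalised) density `e^{-‖Y - B‖²/(2σ²)}` of a matrix with independent `N(B_ij, σ²)`
entries, the norm being the Frobenius norm. -/
noncomputable def gaussianMatrixDensity {ι κ : Type*} [Fintype ι] [Fintype κ] (σ : ℝ)
    (B Y : Matrix ι κ ℝ) : ℝ :=
  Real.exp (-(∑ i, ∑ j, (Y i j - B i j) ^ 2) / (2 * σ ^ 2))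

lemma exists_pi_pi_gaussianReal_eq {ι κ : Type*} [Fintype ι] [Fintype κ] (B : Matrix ι κ ℝ)
    {σ : ℝ} (hσ : 0 < σ) :
    ∃ C : ℝ≥0∞, Measure.pi (fun i ↦ Measure.pi fun j ↦
        gaussianReal (B i j) ⟨σ ^ 2, sq_nonneg σ⟩) =
      C • (volume : Measure (ι → κ → ℝ)).withDensity fun Y ↦
        ENNReal.ofReal (gaussianMatrixDensity σ B (of Y)) := by
  set v : ℝ≥0 := ⟨σ ^ 2, sq_nonneg σ⟩
  have hv : v ≠ 0 := fun h ↦ (pow_pos hσ 2).ne' (congrArg NNReal.toReal h)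
  have row_int (i : ι) : Integrable fun x : κ → ℝ ↦ ∏ j, gaussianPDFReal (B i j) v (x j) :=
    Integrable.fintype_prod_dep fun j ↦ integrable_gaussianPDFReal (B i j) v
  have row_nonneg (i : ι) (x : κ → ℝ) : 0 ≤ ∏ j, gaussianPDFReal (B i j) v (x j) :=
    Finset.prod_nonneg fun j _ ↦ gaussianPDFReal_nonneg (B i j) v (x j)
  refine ⟨ENNReal.ofReal (∏ _ : ι, ∏ _ : κ, (√(2 * Real.pi * v))⁻¹), ?_⟩
  simp only [pi_gaussianReal_eq_withDensity _ hv]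
  rw [pi_withDensity_ofReal (fun _ ↦ volume) row_int row_nonneg,
    ← withDensity_smul' _ _ ofReal_ne_top]
  congr 1
  ext Y
  rw [Pi.smul_apply, smul_eq_mul, ← ENNReal.ofReal_mul (by positivity)]
  simp only [gaussianPDFReal, Finset.prod_mul_distrib, ← Real.exp_sum, gaussianMatrixDensity,
    neg_div, Finset.sum_div, Finset.sum_neg_distrib, of_apply]
  rfl

end Gaussian

section BlockDeterminants

lemma det_eq_mul_of_snd_comp_inl_eq_zero {R E₁ E₂ : Type*} [CommRing R] [AddCommGroup E₁]
    [Module R E₁] [AddCommGroup E₂] [Module R E₂] [Module.Free R E₁] [Module.Finite R E₁]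
    [Module.Free R E₂] [Module.Finite R E₂] (T : E₁ × E₂ →ₗ[R] E₁ × E₂)
    (hT : .snd R E₁ E₂ ∘ₗ T ∘ₗ .inl R E₁ E₂ = 0) :
    T.det = (.fst R E₁ E₂ ∘ₗ T ∘ₗ .inl R E₁ E₂).det *
      (.snd R E₁ E₂ ∘ₗ T ∘ₗ .inr R E₁ E₂).det := by
  classical
  let b₁ := Module.Free.chooseBasis R E₁
  let b₂ := Module.Free.chooseBasis R E₂
  have blocks : LinearMap.toMatrix (b₁.prod b₂) (b₁.prod b₂) T =
      fromBlocks ((LinearMap.fst R E₁ E₂ ∘ₗ T ∘ₗ .inl R E₁ E₂).toMatrix b₁ b₁)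
        ((LinearMap.fst R E₁ E₂ ∘ₗ T ∘ₗ .inr R E₁ E₂).toMatrix b₂ b₁) 0
        ((LinearMap.snd R E₁ E₂ ∘ₗ T ∘ₗ .inr R E₁ E₂).toMatrix b₂ b₂) := by
    ext (i | i) (j | j)
    case inr.inl =>
      have := congrArg (b₂.repr · i) (DFunLike.congr_fun hT (b₁ j))
      simpa [LinearMap.toMatrix_apply] using this
    all_goals simp [LinearMap.toMatrix_apply]
  rw [← LinearMap.det_toMatrix (b₁.prod b₂), blocks, det_fromBlocks_zero₂₁,
    LinearMap.det_toMatrix, LinearMap.det_toMatrix]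

variable {𝕜 a b : Type*} [Field 𝕜] [Fintype a] [Fintype b] [DecidableEq a] [DecidableEq b]

lemma det_fromBlocks_smul_one {p : 𝕜} (hp : p ≠ 0) (q : 𝕜) (A : Matrix a b 𝕜) (C : Matrix b a 𝕜)
    (hab : Fintype.card b ≤ Fintype.card a) :
    (fromBlocks (p • (1 : Matrix a a 𝕜)) A C (q • (1 : Matrix b b 𝕜))).det =
      p ^ (Fintype.card a - Fintype.card b) * (C * A).charpoly.eval (p * q) := by
  let _ : Invertible (p • (1 : Matrix a a 𝕜)) :=
    ⟨p⁻¹ • 1, by simp [smul_smul, hp], by simp [smul_smul, hp]⟩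
  have schur : q • (1 : Matrix b b 𝕜) - C * (p⁻¹ • (1 : Matrix a a 𝕜)) * A =
      p⁻¹ • (scalar b (p * q) - C * A) := by
    rw [Matrix.mul_smul, Matrix.mul_one, Matrix.smul_mul, smul_sub, scalar_apply,
      ← smul_one_eq_diagonal, smul_smul, inv_mul_cancel_left₀ hp]
  rw [det_fromBlocks₁₁, show ⅟(p • (1 : Matrix a a 𝕜)) = p⁻¹ • 1 from rfl, schur, det_smul,
    det_smul, det_one, mul_one, eval_charpoly, ← mul_assoc, inv_pow, ← pow_sub₀ p hp hab]

end BlockDeterminants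

section Chart

/-- The parameters `((s, M), (x, y))` of the chart of matrices with a distinguished rank-one
summand: its coefficient `s`, the lower right block `M` of the remainder, and the directions
`(1, x)`, `(1, y)` of its left and right factors. -/
abbrev Param (a b : Type*) := (ℝ × (a → b → ℝ)) × ((a → ℝ) × (b → ℝ))

variable {a b : Type*}

/-- The parameters as the entries of a matrix with `s` in the corner, `x` in the first column,
`y` in the first row and `M` in the remaining block. -/
def blockEquiv : Param a b ≃ₗ[ℝ] Matrix (Unit ⊕ a) (Unit ⊕ b) ℝ where
  toFun q := fromBlocks (of fun _ _ ↦ q.1.1) (replicateRow Unit q.2.2) (replicateCol Unit q.2.1)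
    (of q.1.2)
  invFun A := ((A (.inl ()) (.inl ()), fun i j ↦ A (.inr i) (.inr j)),
    (fun i ↦ A (.inr i) (.inl ()), fun j ↦ A (.inl ()) (.inr j)))
  map_add' q q' := by ext (i | i) (j | j) <;> rfl
  map_smul' c q := by ext (i | i) (j | j) <;> rfl
  left_inv _ := rfl
  right_inv A := by ext (i | i) (j | j) <;> rfl

lemma blockEquiv_symm_fromBlocks (A : Matrix Unit Unit ℝ) (B : Matrix Unit b ℝ)
    (C : Matrix a Unit ℝ) (D : Matrix a b ℝ) :
    blockEquiv.symm (fromBlocks A B C D) = ((A () (), D), (fun i ↦ C i (), B ())) := rfl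

/-- The homogeneous coordinates `(1, x)`. -/
def homog (x : a → ℝ) : Unit ⊕ a → ℝ := Sum.elim 1 x

/-- The skew-symmetric matrix with first column `(0, x)` and zero lower right block. -/
def skew : (a → ℝ) →ₗ[ℝ] Matrix (Unit ⊕ a) (Unit ⊕ a) ℝ where
  toFun x := fromBlocks 0 (-replicateRow Unit x) (replicateCol Unit x) 0
  map_add' x x' := by ext (i | i) (j | j) <;> simp [add_comm]
  map_smul' c x := by ext (i | i) (j | j) <;> simp

/-- The block diagonal matrix with blocks `s` and `M`, for the pair `(s, M)`. -/
def core : ℝ × (a → b → ℝ) →ₗ[ℝ] Matrix (Unit ⊕ a) (Unit ⊕ b) ℝ where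
  toFun p := fromBlocks (p.1 • 1) 0 0 (of p.2)
  map_add' p p' := by ext (i | i) (j | j) <;> simp [add_smul]
  map_smul' c p := by ext (i | i) (j | j) <;> simp [mul_smul]

section Scale

variable [Fintype a] [Fintype b]

lemma one_add_dotProduct_self_pos (x : a → ℝ) : 0 < 1 + x ⬝ᵥ x :=
  add_pos_of_pos_of_nonneg one_pos (Finset.sum_nonneg fun i _ ↦ mul_self_nonneg (x i))

/-- The product `‖(1, x)‖ ‖(1, y)‖`. -/
noncomputable def scale (x : a → ℝ) (y : b → ℝ) : ℝ := √(1 + x ⬝ᵥ x) * √(1 + y ⬝ᵥ y)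

lemma scale_pos (x : a → ℝ) (y : b → ℝ) : 0 < scale x y :=
  mul_pos (Real.sqrt_pos.2 (one_add_dotProduct_self_pos x))
    (Real.sqrt_pos.2 (one_add_dotProduct_self_pos y))

lemma scale_sq (x : a → ℝ) (y : b → ℝ) : scale x y ^ 2 = (1 + x ⬝ᵥ x) * (1 + y ⬝ᵥ y) := by
  rw [scale, mul_pow, Real.sq_sqrt (one_add_dotProduct_self_pos x).le,
    Real.sq_sqrt (one_add_dotProduct_self_pos y).le]

end Scale

variable [DecidableEq a] [DecidableEq b]

/-- The matrix with columns `(1, x)` and `(-xᵢ, eᵢ)`, the latter a basis of `(1, x)ᗮ`. -/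
def frame (x : a → ℝ) : Matrix (Unit ⊕ a) (Unit ⊕ a) ℝ := 1 + skew x

/-- The Gram matrix `1 + xxᵀ` of the basis `(-xᵢ, eᵢ)` of `(1, x)ᗮ`. -/
def gram (x : a → ℝ) : Matrix a a ℝ := 1 + vecMulVec x x

lemma transpose_gram (x : a → ℝ) : (gram x)ᵀ = gram x := by
  rw [gram, transpose_add, transpose_one, transpose_vecMulVec]

lemma frame_eq_fromBlocks (x : a → ℝ) :
    frame x = fromBlocks 1 (-replicateRow Unit x) (replicateCol Unit x) 1 := by
  rw [frame, ← fromBlocks_one]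
  exact (fromBlocks_add ..).trans (by simp)

lemma frame_add_smul (x ξ : a → ℝ) (t : ℝ) : frame (x + t • ξ) = frame x + t • skew ξ := by
  rw [frame, frame, map_add, map_smul, add_assoc]

variable [Fintype a] [Fintype b]

lemma transpose_frame_mul_frame (x : a → ℝ) :
    (frame x)ᵀ * frame x = fromBlocks ((1 + x ⬝ᵥ x) • 1) 0 0 (gram x) := by
  rw [frame_eq_fromBlocks, fromBlocks_transpose, fromBlocks_multiply]
  ext (i | i) (j | j) <;> simp [mul_apply, dotProduct, gram, vecMulVec_apply, one_apply, add_comm]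

lemma transpose_frame_mul_skew (x ξ : a → ℝ) :
    (frame x)ᵀ * skew ξ =
      fromBlocks ((x ⬝ᵥ ξ) • 1) (-replicateRow Unit ξ) (replicateCol Unit ξ)
        (vecMulVec x ξ) := by
  rw [frame_eq_fromBlocks, fromBlocks_transpose]
  refine (fromBlocks_multiply ..).trans ?_
  ext (i | i) (j | j) <;> simp [mul_apply, dotProduct, vecMulVec_apply]

lemma det_frame (x : a → ℝ) : (frame x).det = 1 + x ⬝ᵥ x := by
  rw [frame_eq_fromBlocks, det_fromBlocks_one₁₁, Matrix.mul_neg, sub_neg_eq_add,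
    det_one_add_replicateCol_mul_replicateRow]

/-- The matrix with parameters `q`. Its summand `core (s, 0)` contributes the rank-one matrix
`s (1, x) (1, y)ᵀ`, and `core (0, M)` a remainder that kills `(1, y)` and is orthogonal
to `(1, x)`. -/
def chartMatrix (q : Param a b) : Matrix (Unit ⊕ a) (Unit ⊕ b) ℝ :=
  frame q.2.1 * core q.1 * (frame q.2.2)ᵀ

/-- The derivative of `chartMatrix` at `q` in the direction `h`. -/
def chartMatrixDeriv (q h : Param a b) : Matrix (Unit ⊕ a) (Unit ⊕ b) ℝ :=
  skew h.2.1 * core q.1 * (frame q.2.2)ᵀ + frame q.2.1 * core h.1 * (frame q.2.2)ᵀ +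
    frame q.2.1 * core q.1 * (skew h.2.2)ᵀ

/-- `chartMatrix`, as a self-map of the parameter space. -/
def chart (q : Param a b) : Param a b := blockEquiv.symm (chartMatrix q)

/-- The linear automorphism `A ↦ (frame x)ᵀ A (frame y)` of the space of matrices, in block
coordinates. -/
def frameConj (x : a → ℝ) (y : b → ℝ) : Param a b →ₗ[ℝ] Param a b where
  toFun h := blockEquiv.symm ((frame x)ᵀ * blockEquiv h * frame y)
  map_add' h h' := by simp only [map_add, Matrix.mul_add, Matrix.add_mul]
  map_smul' c h := by simp only [map_smul, Matrix.mul_smul, Matrix.smul_mul, RingHom.id_apply]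

lemma frameConj_symm_apply (x : a → ℝ) (y : b → ℝ) (A : Matrix (Unit ⊕ a) (Unit ⊕ b) ℝ) :
    frameConj x y (blockEquiv.symm A) = blockEquiv.symm ((frame x)ᵀ * A * frame y) := by
  simp [frameConj]

lemma isUnit_det_frame (x : a → ℝ) : IsUnit (frame x).det := by
  rw [det_frame]
  exact (one_add_dotProduct_self_pos x).ne'.isUnit

lemma det_frameConj_ne_zero (x : a → ℝ) (y : b → ℝ) : (frameConj x y).det ≠ 0 := by
  refine (LinearMap.isUnit_det _ ((LinearMap.isUnit_iff_ker_eq_bot _).2 ?_)).ne_zero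
  refine LinearMap.ker_eq_bot.2 fun h h' hh ↦ blockEquiv.injective ?_
  refine mul_right_injective_of_inv (frame x)⁻¹ᵀ (frame x)ᵀ ?_ <|
    mul_left_injective_of_inv (frame y) (frame y)⁻¹ (mul_nonsing_inv _ (isUnit_det_frame y)) <|
    blockEquiv.symm.injective hh
  rw [← transpose_mul, mul_nonsing_inv _ (isUnit_det_frame x), transpose_one]

lemma hasLineDerivAt_chart (q h : Param a b) :
    HasLineDerivAt ℝ chart (blockEquiv.symm (chartMatrixDeriv q h)) q h := by
  obtain ⟨w, z, expansion⟩ : ∃ w z : Param a b, ∀ t : ℝ, chart (q + t • h) =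
      chart q + t • blockEquiv.symm (chartMatrixDeriv q h) + t ^ 2 • w + t ^ 3 • z := by
    refine ⟨blockEquiv.symm (skew h.2.1 * core h.1 * (frame q.2.2)ᵀ +
        skew h.2.1 * core q.1 * (skew h.2.2)ᵀ + frame q.2.1 * core h.1 * (skew h.2.2)ᵀ),
      blockEquiv.symm (skew h.2.1 * core h.1 * (skew h.2.2)ᵀ), fun t ↦ ?_⟩
    simp only [chart, chartMatrix, chartMatrixDeriv, Prod.fst_add, Prod.snd_add, Prod.smul_fst,
      Prod.smul_snd, frame_add_smul, ← map_add, ← map_smul]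
    congr 1
    simp only [map_add, map_smul, transpose_add, transpose_smul, Matrix.add_mul, Matrix.mul_add,
      Matrix.smul_mul, Matrix.mul_smul]
    module
  have linear := (hasDerivAt_id (0 : ℝ)).smul_const (blockEquiv.symm (chartMatrixDeriv q h))
  have quadratic := (hasDerivAt_pow 2 (0 : ℝ)).smul_const w
  have cubic := (hasDerivAt_pow 3 (0 : ℝ)).smul_const z
  have sum := ((linear.const_add (chart q)).add quadratic).add cubic
  refine (sum.congr_deriv ?_).congr_of_eventuallyEq (.of_forall fun t ↦ expansion t)
  simp

lemma contDiff_frame_apply (i j : Unit ⊕ a) : ContDiff ℝ 1 fun x : a → ℝ ↦ frame x i j :=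
  contDiff_const.add (entryLinearMap ℝ ℝ i j ∘ₗ skew).toContinuousLinearMap.contDiff

lemma contDiff_chartMatrix_apply (i : Unit ⊕ a) (j : Unit ⊕ b) :
    ContDiff ℝ 1 fun q : Param a b ↦ chartMatrix q i j := by
  simp only [chartMatrix, mul_apply, transpose_apply]
  refine .sum fun k _ ↦ .mul (.sum fun l _ ↦ .mul ?_ ?_) ?_
  · exact (contDiff_frame_apply i l).comp (by fun_prop)
  · exact (entryLinearMap ℝ ℝ l k ∘ₗ core).toContinuousLinearMap.contDiff.comp contDiff_fst
  · exact (contDiff_frame_apply j k).comp (by fun_prop)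

lemma contDiff_chart : ContDiff ℝ 1 (chart : Param a b → Param a b) := by
  refine ContDiff.prodMk (ContDiff.prodMk ?_ ?_) (ContDiff.prodMk ?_ ?_)
  · exact contDiff_chartMatrix_apply _ _
  · exact contDiff_pi.2 fun i ↦ contDiff_pi.2 fun j ↦ contDiff_chartMatrix_apply (.inr i) (.inr j)
  · exact contDiff_pi.2 fun i ↦ contDiff_chartMatrix_apply (.inr i) (.inl ())
  · exact contDiff_pi.2 fun j ↦ contDiff_chartMatrix_apply (.inl ()) (.inr j)

lemma fderiv_chart (q h : Param a b) :
    fderiv ℝ chart q h = blockEquiv.symm (chartMatrixDeriv q h) :=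
  ((contDiff_chart.differentiable one_ne_zero q).hasFDerivAt.hasLineDerivAt h).unique
    (hasLineDerivAt_chart q h)

/-- The derivative of `chart` at `q`, in the coordinates on its target in which it is block
triangular. -/
noncomputable def chartDeriv (q : Param a b) : Param a b →ₗ[ℝ] Param a b :=
  frameConj q.2.1 q.2.2 ∘ₗ (fderiv ℝ chart q : Param a b →ₗ[ℝ] Param a b)

lemma chartDeriv_apply_zero_right (q : Param a b) (p : ℝ × (a → b → ℝ)) :
    chartDeriv q (p, 0) = frameConj q.2.1 q.2.2 (chart (p, q.2)) := by
  change frameConj q.2.1 q.2.2 (fderiv ℝ chart q (p, 0)) = _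
  rw [fderiv_chart, chartMatrixDeriv, chart, chartMatrix]
  simp

lemma snd_frameConj_chart (q : Param a b) : (frameConj q.2.1 q.2.2 (chart q)).2 = 0 := by
  have blocks : (frame q.2.1)ᵀ * chartMatrix q * frame q.2.2 =
      ((frame q.2.1)ᵀ * frame q.2.1) * core q.1 * ((frame q.2.2)ᵀ * frame q.2.2) := by
    simp only [chartMatrix, Matrix.mul_assoc]
  rw [chart, frameConj_symm_apply, blocks, transpose_frame_mul_frame, transpose_frame_mul_frame]
  simp only [core, LinearMap.coe_mk, AddHom.coe_mk, fromBlocks_multiply, Matrix.mul_zero,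
    Matrix.zero_mul, add_zero, zero_add, blockEquiv_symm_fromBlocks]
  rfl

/-- The block of `chartDeriv` that acts on the directions `(ξ, η)` of the two factors. -/
def factorDeriv (q : Param a b) : Matrix (a ⊕ b) (a ⊕ b) ℝ :=
  fromBlocks ((q.1.1 * (1 + q.2.2 ⬝ᵥ q.2.2)) • 1) (-(gram q.2.1 * of q.1.2))
    (-(gram q.2.2 * (of q.1.2)ᵀ)) ((q.1.1 * (1 + q.2.1 ⬝ᵥ q.2.1)) • 1)

lemma snd_chartDeriv_apply_zero_left (q : Param a b) (z : (a → ℝ) × (b → ℝ)) :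
    (chartDeriv q (0, z)).2 = (LinearEquiv.sumArrowLequivProdArrow a b ℝ ℝ).conj
      (toLin' (factorDeriv q)) z := by
  have blocks : (frame q.2.1)ᵀ * chartMatrixDeriv q (0, z) * frame q.2.2 =
      ((frame q.2.1)ᵀ * skew z.1) * core q.1 * ((frame q.2.2)ᵀ * frame q.2.2) +
        ((frame q.2.1)ᵀ * frame q.2.1) * core q.1 * ((frame q.2.2)ᵀ * skew z.2)ᵀ := by
    simp [chartMatrixDeriv, Matrix.mul_assoc, Matrix.mul_add, Matrix.add_mul]
  change (frameConj q.2.1 q.2.2 (fderiv ℝ chart q (0, z))).2 = _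
  rw [fderiv_chart, frameConj_symm_apply, blocks, transpose_frame_mul_frame,
    transpose_frame_mul_frame, transpose_frame_mul_skew, transpose_frame_mul_skew,
    fromBlocks_transpose]
  have inl : (LinearEquiv.sumArrowLequivProdArrow a b ℝ ℝ).symm z ∘ Sum.inl = z.1 := rfl
  have inr : (LinearEquiv.sumArrowLequivProdArrow a b ℝ ℝ).symm z ∘ Sum.inr = z.2 := rfl
  refine Prod.ext (funext fun i ↦ ?_) (funext fun j ↦ ?_) <;>
    simp [core, fromBlocks_multiply, fromBlocks_add, blockEquiv_symm_fromBlocks,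
      LinearEquiv.conj_apply, factorDeriv, fromBlocks_mulVec, inl, inr, neg_mulVec,
      ← replicateCol_mulVec, ← replicateRow_vecMul, ← mulVec_transpose, transpose_gram,
      smul_mulVec] <;>
    ring

/-- A matrix whose characteristic polynomial is that of `ZᵀZ`, with `Z` the remainder in
`chartMatrix`, stripped of the root `0` that accounts for `Z (1, y) = 0`. -/
def remainderGram (M : a → b → ℝ) (x : a → ℝ) (y : b → ℝ) : Matrix b b ℝ :=
  gram y * (of M)ᵀ * (gram x * of M)

lemma abs_det_factorDeriv (q : Param a b) (hab : Fintype.card b ≤ Fintype.card a)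
    (hs : q.1.1 ≠ 0) :
    |(factorDeriv q).det| =
      ((1 + q.2.2 ⬝ᵥ q.2.2) / scale q.2.1 q.2.2) ^ (Fintype.card a - Fintype.card b) *
        ((scale q.2.1 q.2.2 * |q.1.1|) ^ (Fintype.card a - Fintype.card b) *
          |(remainderGram q.1.2 q.2.1 q.2.2).charpoly.eval
            ((scale q.2.1 q.2.2 * |q.1.1|) ^ 2)|) := by
  have hy := one_add_dotProduct_self_pos q.2.2
  have base : |q.1.1 * (1 + q.2.2 ⬝ᵥ q.2.2)| =
      (1 + q.2.2 ⬝ᵥ q.2.2) / scale q.2.1 q.2.2 * (scale q.2.1 q.2.2 * |q.1.1|) := by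
    rw [abs_mul, abs_of_pos hy]
    field_simp [(scale_pos q.2.1 q.2.2).ne']
  have node : q.1.1 * (1 + q.2.2 ⬝ᵥ q.2.2) * (q.1.1 * (1 + q.2.1 ⬝ᵥ q.2.1)) =
      (scale q.2.1 q.2.2 * |q.1.1|) ^ 2 := by
    rw [mul_pow, scale_sq, sq_abs]
    ring
  rw [factorDeriv, det_fromBlocks_smul_one (mul_ne_zero hs hy.ne') _ _ _ hab, Matrix.neg_mul,
    Matrix.mul_neg, neg_neg, abs_mul, abs_pow, base, node, mul_pow, mul_assoc, remainderGram]

lemma exists_abs_det_fderiv_chart_eq (M : a → b → ℝ) (x : a → ℝ) (y : b → ℝ)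
    (hab : Fintype.card b ≤ Fintype.card a) :
    ∃ c : ℝ, ∀ s : ℝ, s ≠ 0 → |(fderiv ℝ chart ((s, M), (x, y))).det| =
      c * ((scale x y * |s|) ^ (Fintype.card a - Fintype.card b) *
        |(remainderGram M x y).charpoly.eval ((scale x y * |s|) ^ 2)|) := by
  let diag := LinearMap.fst ℝ _ _ ∘ₗ chartDeriv ((0, 0), (x, y)) ∘ₗ LinearMap.inl ℝ _ _
  refine ⟨|diag.det| * ((1 + y ⬝ᵥ y) / scale x y) ^ (Fintype.card a - Fintype.card b) /
    |(frameConj x y).det|, fun s hs ↦ ?_⟩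
  set q : Param a b := ((s, M), (x, y))
  have triangular : LinearMap.snd ℝ _ _ ∘ₗ chartDeriv q ∘ₗ LinearMap.inl ℝ _ _ = 0 :=
    LinearMap.ext fun p ↦ by
      simpa [chartDeriv_apply_zero_right] using snd_frameConj_chart (p, q.2)
  have upper : LinearMap.fst ℝ _ _ ∘ₗ chartDeriv q ∘ₗ LinearMap.inl ℝ _ _ = diag :=
    LinearMap.ext fun p ↦ by simp [diag, chartDeriv_apply_zero_right, q]
  have lower : LinearMap.snd ℝ _ _ ∘ₗ chartDeriv q ∘ₗ LinearMap.inr ℝ _ _ =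
      (LinearEquiv.sumArrowLequivProdArrow a b ℝ ℝ).conj (toLin' (factorDeriv q)) :=
    LinearMap.ext fun z ↦ snd_chartDeriv_apply_zero_left q z
  have det_chartDeriv := det_eq_mul_of_snd_comp_inl_eq_zero _ triangular
  rw [upper, lower, LinearEquiv.conj_apply, LinearMap.comp_assoc, LinearMap.det_conj,
    LinearMap.det_toLin', chartDeriv, LinearMap.det_comp]
    at det_chartDeriv
  have abs_det := congrArg abs det_chartDeriv
  rw [abs_mul, abs_mul, abs_det_factorDeriv q hab hs] at abs_det
  rw [div_mul_eq_mul_div, eq_div_iff (abs_pos.2 (det_frameConj_ne_zero x y)).ne', mul_comm,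
    mul_assoc]
  exact abs_det

end Chart

section RankOneSplit

open scoped Matrix.Norms.L2Operator

variable {m n : Type*} [Fintype m] [Fintype n]

/-- `Y = u vᵀ + Z` is a splitting off of a dominant rank-one summand: `v` is a unit vector, `Z`
vanishes on `v` and has range orthogonal to `u`, and the only singular value `‖u‖` of `u vᵀ` is at
least those of `Z`. -/
structure IsRankOneSplit [DecidableEq n] (Y Z : Matrix m n ℝ) (u : m → ℝ) (v : n → ℝ) : Prop where
  eq_add : Y = vecMulVec u v + Z
  dotProduct_self_right : v ⬝ᵥ v = 1
  mulVec_eq_zero : Z *ᵥ v = 0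
  vecMul_eq_zero : u ᵥ* Z = 0
  norm_sq_le : ‖Z‖ ^ 2 ≤ u ⬝ᵥ u

/-- `Y = U diag(d) Vᵀ` is a singular value decomposition in which `d o` is a largest singular
value. The singular values are indexed by a type `r` of their own. -/
structure IsSVD {r : Type*} [Fintype r] [DecidableEq r] (Y : Matrix m n ℝ) (U : Matrix m r ℝ)
    (d : r → ℝ) (V : Matrix n r ℝ) (o : r) : Prop where
  eq_mul : Y = U * diagonal d * Vᵀ
  transpose_mul_self_left : Uᵀ * U = 1
  transpose_mul_self_right : Vᵀ * V = 1
  nonneg : ∀ j, 0 ≤ d j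
  le_max : ∀ j, d j ≤ d o

lemma dotProduct_self_mulVec_le [DecidableEq n] (Z : Matrix m n ℝ) (w : n → ℝ) :
    (Z *ᵥ w) ⬝ᵥ (Z *ᵥ w) ≤ ‖Z‖ ^ 2 * (w ⬝ᵥ w) := by
  have h := pow_le_pow_left₀ (norm_nonneg _) (l2_opNorm_mulVec Z (.toLp 2 w)) 2
  rw [mul_pow, EuclideanSpace.real_norm_sq_eq, EuclideanSpace.real_norm_sq_eq] at h
  simpa [dotProduct, sq] using h

lemma l2_opNorm_transpose [DecidableEq m] [DecidableEq n] (A : Matrix m n ℝ) : ‖Aᵀ‖ = ‖A‖ := by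
  rw [← conjTranspose_eq_transpose_of_trivial, l2_opNorm_conjTranspose]

lemma l2_opNorm_le_one_of_transpose_mul_self_eq_one [DecidableEq n] {A : Matrix m n ℝ}
    (hA : Aᵀ * A = 1) : ‖A‖ ≤ 1 := by
  have h := l2_opNorm_conjTranspose_mul_self A
  rw [conjTranspose_eq_transpose_of_trivial, hA, ← diagonal_one, l2_opNorm_diagonal] at h
  have := pi_norm_const_le (ι := n) (1 : ℝ)
  rw [norm_one] at this
  nlinarith [show ‖A‖ * ‖A‖ ≤ 1 from h ▸ this, norm_nonneg A]

namespace IsRankOneSplit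

variable [DecidableEq n] {Y Z Z' : Matrix m n ℝ} {u u' : m → ℝ} {v v' : n → ℝ}

lemma mulVec_right (h : IsRankOneSplit Y Z u v) : Y *ᵥ v = u := by
  rw [h.eq_add, add_mulVec, vecMulVec_mulVec, h.mulVec_eq_zero, h.dotProduct_self_right]
  simp

lemma dotProduct_self_mulVec (h : IsRankOneSplit Y Z u v) (w : n → ℝ) :
    (Y *ᵥ w) ⬝ᵥ (Y *ᵥ w) = (u ⬝ᵥ u) * (v ⬝ᵥ w) ^ 2 + (Z *ᵥ w) ⬝ᵥ (Z *ᵥ w) := by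
  have orth : u ⬝ᵥ Z *ᵥ w = 0 := by rw [dotProduct_mulVec, h.vecMul_eq_zero, zero_dotProduct]
  rw [h.eq_add, add_mulVec, vecMulVec_mulVec, op_smul_eq_smul]
  simp only [dotProduct_add, add_dotProduct, smul_dotProduct, dotProduct_smul, orth,
    dotProduct_comm _ u, smul_eq_mul]
  ring

lemma dotProduct_self_remainder_le (h : IsRankOneSplit Y Z u v) (w : n → ℝ) :
    (Z *ᵥ w) ⬝ᵥ (Z *ᵥ w) ≤ ‖Z‖ ^ 2 * (w ⬝ᵥ w - (v ⬝ᵥ w) ^ 2) := by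
  have proj := dotProduct_self_mulVec_le Z (w - (v ⬝ᵥ w) • v)
  rw [mulVec_sub, mulVec_smul, h.mulVec_eq_zero, smul_zero, sub_zero] at proj
  refine proj.trans_eq ?_
  simp only [dotProduct_sub, sub_dotProduct, smul_dotProduct, dotProduct_smul,
    h.dotProduct_self_right, smul_eq_mul, dotProduct_comm w v]
  ring

lemma sq_dotProduct_le (h : IsRankOneSplit Y Z u v) (w : n → ℝ) : (v ⬝ᵥ w) ^ 2 ≤ w ⬝ᵥ w := by
  have proj : 0 ≤ (w - (v ⬝ᵥ w) • v) ⬝ᵥ (w - (v ⬝ᵥ w) • v) :=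
    Finset.sum_nonneg fun i _ ↦ mul_self_nonneg _
  simp only [dotProduct_sub, sub_dotProduct, smul_dotProduct, dotProduct_smul,
    h.dotProduct_self_right, smul_eq_mul, dotProduct_comm w v] at proj
  linarith

lemma dotProduct_self_mulVec_le (h : IsRankOneSplit Y Z u v) (w : n → ℝ) :
    (Y *ᵥ w) ⬝ᵥ (Y *ᵥ w) ≤ (u ⬝ᵥ u) * (w ⬝ᵥ w) := by
  rw [h.dotProduct_self_mulVec]
  nlinarith [h.dotProduct_self_remainder_le w, h.sq_dotProduct_le w, h.norm_sq_le]

theorem unique (h : IsRankOneSplit Y Z u v) (hlt : ‖Z‖ ^ 2 < u ⬝ᵥ u)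
    (h' : IsRankOneSplit Y Z' u' v') : vecMulVec u' v' = vecMulVec u v ∧ Z' = Z := by
  have maximal : u ⬝ᵥ u ≤ (Y *ᵥ v') ⬝ᵥ (Y *ᵥ v') := by
    simpa [h.mulVec_right, h'.mulVec_right, h.dotProduct_self_right] using
      h'.dotProduct_self_mulVec_le v
  have sq_eq_one : (v ⬝ᵥ v') ^ 2 = 1 := by
    have upper := h.sq_dotProduct_le v'
    have remainder := h.dotProduct_self_remainder_le v'
    rw [h.dotProduct_self_mulVec] at maximal
    rw [h'.dotProduct_self_right] at upper remainder
    nlinarith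
  have eq_smul : v' = (v ⬝ᵥ v') • v := by
    rw [← sub_eq_zero, ← dotProduct_self_eq_zero]
    simp only [dotProduct_sub, sub_dotProduct, smul_dotProduct, dotProduct_smul, smul_eq_mul,
      h.dotProduct_self_right, h'.dotProduct_self_right, dotProduct_comm v' v]
    linarith
  have rank_one : vecMulVec u' v' = vecMulVec u v := by
    rw [← h'.mulVec_right, eq_smul, mulVec_smul, h.mulVec_right, smul_vecMulVec, vecMulVec_smul,
      smul_smul, ← sq, sq_eq_one, one_smul]
  exact ⟨rank_one, add_left_cancel (rank_one ▸ h'.eq_add.symm.trans h.eq_add)⟩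

end IsRankOneSplit

namespace IsSVD

variable {r : Type*} [Fintype r] [DecidableEq r] {Y : Matrix m n ℝ} {U : Matrix m r ℝ} {d : r → ℝ}
  {V : Matrix n r ℝ} {o : r}

lemma card_le (h : IsSVD Y U d V o) : Fintype.card r ≤ Fintype.card m :=
  calc Fintype.card r = (Uᵀ * U).rank := by rw [h.transpose_mul_self_left, rank_one]
    _ ≤ U.rank := rank_mul_le_right _ _
    _ ≤ Fintype.card m := rank_le_card_height _

lemma submatrix {m' n' : Type*} [Fintype m'] [Fintype n'] (h : IsSVD Y U d V o) (e : m' ≃ m)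
    (f : n' ≃ n) : IsSVD (Y.submatrix e f) (U.submatrix e id) d (V.submatrix f id) o where
  eq_mul := by
    rw [h.eq_mul, transpose_submatrix, ← submatrix_mul_equiv _ _ e (Equiv.refl r) f,
      ← submatrix_mul_equiv _ _ e (Equiv.refl r) (Equiv.refl r)]
    rfl
  transpose_mul_self_left := by
    rw [transpose_submatrix, submatrix_mul_equiv, h.transpose_mul_self_left, submatrix_id_id]
  transpose_mul_self_right := by
    rw [transpose_submatrix, submatrix_mul_equiv, h.transpose_mul_self_right, submatrix_id_id]
  nonneg := h.nonneg
  le_max := h.le_max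

lemma col_left_dotProduct_self (h : IsSVD Y U d V o) (j : r) : U.col j ⬝ᵥ U.col j = 1 := by
  exact (congr_fun₂ h.transpose_mul_self_left j j).trans (one_apply_eq j)

lemma col_right_dotProduct_self (h : IsSVD Y U d V o) (j : r) : V.col j ⬝ᵥ V.col j = 1 := by
  exact (congr_fun₂ h.transpose_mul_self_right j j).trans (one_apply_eq j)

lemma norm_remainder [DecidableEq n] (h : IsSVD Y U d V o) :
    ‖U * diagonal (Function.update d o 0) * Vᵀ‖ = ‖Function.update d o 0‖ := by
  classical
  set D := diagonal (Function.update d o 0)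
  have hU : ‖U‖ ≤ 1 := l2_opNorm_le_one_of_transpose_mul_self_eq_one h.transpose_mul_self_left
  have hV : ‖V‖ ≤ 1 := l2_opNorm_le_one_of_transpose_mul_self_eq_one h.transpose_mul_self_right
  rw [← l2_opNorm_diagonal (𝕜 := ℝ)]
  refine le_antisymm ?_ ?_
  · calc ‖U * D * Vᵀ‖ ≤ ‖U‖ * ‖D‖ * ‖Vᵀ‖ :=
        (l2_opNorm_mul _ _).trans (by gcongr; exact l2_opNorm_mul _ _)
      _ ≤ 1 * ‖D‖ * 1 := by gcongr; rwa [l2_opNorm_transpose]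
      _ = ‖D‖ := by ring
  · calc ‖D‖ = ‖Uᵀ * (U * D * Vᵀ) * V‖ := by
          rw [Matrix.mul_assoc, Matrix.mul_assoc, h.transpose_mul_self_right, Matrix.mul_one,
            ← Matrix.mul_assoc, h.transpose_mul_self_left, Matrix.one_mul]
      _ ≤ ‖Uᵀ‖ * ‖U * D * Vᵀ‖ * ‖V‖ :=
        (l2_opNorm_mul _ _).trans (by gcongr; exact l2_opNorm_mul _ _)
      _ ≤ 1 * ‖U * D * Vᵀ‖ * 1 := by gcongr; rwa [l2_opNorm_transpose]
      _ = ‖U * D * Vᵀ‖ := by ring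

lemma isRankOneSplit [DecidableEq n] (h : IsSVD Y U d V o) :
    IsRankOneSplit Y (U * diagonal (Function.update d o 0) * Vᵀ) (d o • U.col o) (V.col o) where
  eq_add := by
    ext i j
    rw [h.eq_mul, Matrix.add_apply, ← sub_eq_iff_eq_add, mul_apply, mul_apply,
      ← Finset.sum_sub_distrib, Finset.sum_eq_single o]
    · simp [vecMulVec_apply, mul_comm (d o)]
    · intro k _ hk
      simp [hk]
    · simp
  dotProduct_self_right := h.col_right_dotProduct_self o
  mulVec_eq_zero := by
    rw [← mulVec_single_one, mulVec_mulVec, Matrix.mul_assoc, h.transpose_mul_self_right,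
      Matrix.mul_one, ← mulVec_mulVec]
    simp
  vecMul_eq_zero := by
    have killed : Pi.single o 1 ᵥ* diagonal (Function.update d o 0) = 0 := by
      ext j
      rcases eq_or_ne j o with rfl | hj <;> simp [vecMul_diagonal, *]
    rw [← mulVec_single_one, ← vecMul_transpose, smul_vecMul, vecMul_vecMul, ← Matrix.mul_assoc,
      ← Matrix.mul_assoc, h.transpose_mul_self_left, Matrix.one_mul, ← vecMul_vecMul, killed,
      zero_vecMul, smul_zero]
  norm_sq_le := by
    rw [h.norm_remainder, smul_dotProduct, dotProduct_smul, h.col_left_dotProduct_self]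
    have : ‖Function.update d o 0‖ ≤ d o := (pi_norm_le_iff_of_nonneg (h.nonneg o)).2 fun j ↦ by
      rcases eq_or_ne j o with rfl | hj
      · simpa using h.nonneg j
      · simpa [hj, abs_of_nonneg (h.nonneg j)] using h.le_max j
    simpa [sq] using pow_le_pow_left₀ (norm_nonneg _) this 2

lemma charpoly_transpose_mul_self_remainder [DecidableEq n] (h : IsSVD Y U d V o)
    (hcard : Fintype.card n = Fintype.card r) :
    ((U * diagonal (Function.update d o 0) * Vᵀ)ᵀ *
        (U * diagonal (Function.update d o 0) * Vᵀ)).charpoly =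
      Polynomial.X * ∏ j ∈ Finset.univ.erase o, (Polynomial.X - Polynomial.C (d j ^ 2)) := by
  set D := diagonal (Function.update d o 0) with hD
  have gram : (U * D * Vᵀ)ᵀ * (U * D * Vᵀ) = V * (D * D * Vᵀ) := by
    rw [transpose_mul, transpose_mul, transpose_transpose, hD, diagonal_transpose, ← hD]
    calc V * (D * Uᵀ) * (U * D * Vᵀ) = V * (D * (Uᵀ * U) * D * Vᵀ) := by
          simp only [Matrix.mul_assoc]
      _ = V * (D * D * Vᵀ) := by rw [h.transpose_mul_self_left, Matrix.mul_one]
  rw [gram, charpoly_mul_comm_of_le _ _ hcard.ge, hcard, Nat.sub_self, pow_zero, one_mul,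
    Matrix.mul_assoc, h.transpose_mul_self_right, Matrix.mul_one, hD, diagonal_mul_diagonal,
    charpoly_diagonal, ← Finset.mul_prod_erase _ _ (Finset.mem_univ o)]
  congr 1
  · simp
  · refine Finset.prod_congr rfl fun j hj ↦ ?_
    rw [Function.update_of_ne (Finset.ne_of_mem_erase hj), sq]

lemma norm_update_lt_iff (h : IsSVD Y U d V o) (z : ℝ) :
    ‖Function.update d o 0‖ < z ↔ 0 < z ∧ ∀ j, j ≠ o → d j < z := by
  refine ⟨fun hz ↦ ?_, fun ⟨hz, hd⟩ ↦ (pi_norm_lt_iff hz).2 fun j ↦ ?_⟩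
  · have hz' := (norm_nonneg _).trans_lt hz
    refine ⟨hz', fun j hj ↦ ?_⟩
    simpa [hj, abs_of_nonneg (h.nonneg j)] using (pi_norm_lt_iff hz').1 hz j
  · rcases eq_or_ne j o with rfl | hj
    · simpa using hz
    · simpa [hj, abs_of_nonneg (h.nonneg j)] using hd j hj

end IsSVD

end RankOneSplit

section ChartSplit

open scoped Matrix.Norms.L2Operator

variable {a b : Type*}

lemma core_eq_add (p : ℝ × (a → b → ℝ)) :
    core p = p.1 • vecMulVec (homog 0) (homog 0) + core (0, p.2) := by
  ext (i | i) (j | j) <;> simp [core, homog, vecMulVec_apply]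

lemma smul_homog_div {u : Unit ⊕ a → ℝ} (hu : u (.inl ()) ≠ 0) :
    u (.inl ()) • homog (fun i ↦ u (.inr i) / u (.inl ())) = u := by
  ext (i | i)
  · simp [homog]
  · simp [homog, mul_div_cancel₀ _ hu]

variable [Fintype b]

lemma homog_dotProduct_self (y : b → ℝ) : homog y ⬝ᵥ homog y = 1 + y ⬝ᵥ y := by
  simp [homog, dotProduct]

lemma mulVec_homog_apply {m : Type*} (Z : Matrix m (Unit ⊕ b) ℝ) (y : b → ℝ) (i : m) :
    (Z *ᵥ homog y) i = Z i (.inl ()) + ∑ j, Z i (.inr j) * y j := by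
  simp [mulVec, dotProduct, homog]

/-- The left factor of the rank-one summand of `chartMatrix`, normalised so that `chartRight` is
a unit vector. -/
noncomputable def chartLeft (q : Param a b) : Unit ⊕ a → ℝ :=
  (√(1 + q.2.2 ⬝ᵥ q.2.2) * q.1.1) • homog q.2.1

/-- The right factor of the rank-one summand of `chartMatrix`, a unit vector. -/
noncomputable def chartRight (q : Param a b) : Unit ⊕ b → ℝ :=
  (√(1 + q.2.2 ⬝ᵥ q.2.2))⁻¹ • homog q.2.2

lemma vecMulVec_chartLeft_chartRight (q : Param a b) :
    vecMulVec (chartLeft q) (chartRight q) = q.1.1 • vecMulVec (homog q.2.1) (homog q.2.2) := by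
  rw [chartLeft, chartRight, vecMulVec_smul, smul_vecMulVec, smul_smul,
    inv_mul_cancel_left₀ (Real.sqrt_pos.2 (one_add_dotProduct_self_pos q.2.2)).ne']

lemma chartRight_dotProduct_self (q : Param a b) : chartRight q ⬝ᵥ chartRight q = 1 := by
  have hβ := one_add_dotProduct_self_pos q.2.2
  rw [chartRight, smul_dotProduct, dotProduct_smul, homog_dotProduct_self, smul_eq_mul,
    smul_eq_mul, ← mul_assoc, ← mul_inv, Real.mul_self_sqrt hβ.le, inv_mul_cancel₀ hβ.ne']

variable [Fintype a]

lemma chartLeft_dotProduct_self (q : Param a b) :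
    chartLeft q ⬝ᵥ chartLeft q = (scale q.2.1 q.2.2 * |q.1.1|) ^ 2 := by
  rw [chartLeft, smul_dotProduct, dotProduct_smul, homog_dotProduct_self, smul_eq_mul,
    smul_eq_mul, mul_pow, scale_sq, sq_abs]
  linear_combination (1 + q.2.1 ⬝ᵥ q.2.1) * q.1.1 ^ 2 *
    Real.mul_self_sqrt (one_add_dotProduct_self_pos q.2.2).le

lemma homog_vecMul_apply {n : Type*} (x : a → ℝ) (Z : Matrix (Unit ⊕ a) n ℝ) (j : n) :
    (homog x ᵥ* Z) j = Z (.inl ()) j + ∑ i, x i * Z (.inr i) j := by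
  simp [vecMul, dotProduct, homog]

variable [DecidableEq a] [DecidableEq b]

/-- The remainder left by the rank-one summand of `chartMatrix`. -/
def remainder (M : a → b → ℝ) (x : a → ℝ) (y : b → ℝ) : Matrix (Unit ⊕ a) (Unit ⊕ b) ℝ :=
  chartMatrix ((0, M), (x, y))

lemma remainder_eq_fromBlocks (M : a → b → ℝ) (x : a → ℝ) (y : b → ℝ) :
    remainder M x y = fromBlocks ((x ⬝ᵥ of M *ᵥ y) • 1) (-replicateRow Unit (x ᵥ* of M))
      (-replicateCol Unit (of M *ᵥ y)) (of M) := by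
  rw [remainder, chartMatrix, frame_eq_fromBlocks, frame_eq_fromBlocks, fromBlocks_transpose]
  simp only [core, LinearMap.coe_mk, AddHom.coe_mk, zero_smul]
  rw [fromBlocks_multiply, fromBlocks_multiply]
  ext (i | i) (j | j)
  · simp [← replicateRow_vecMul, ← replicateCol_mulVec, dotProduct_mulVec, neg_mulVec]
    rfl
  all_goals simp [← replicateRow_vecMul, ← replicateCol_mulVec]

lemma frame_mulVec_homog_zero (x : a → ℝ) : frame x *ᵥ homog 0 = homog x := by
  ext (i | i) <;> rw [mulVec_homog_apply, frame_eq_fromBlocks] <;> simp [homog]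

lemma chartMatrix_eq_add (q : Param a b) :
    chartMatrix q = q.1.1 • vecMulVec (homog q.2.1) (homog q.2.2) +
      remainder q.1.2 q.2.1 q.2.2 := by
  rw [chartMatrix, core_eq_add, Matrix.mul_add, Matrix.add_mul, Matrix.mul_smul, Matrix.smul_mul,
    mul_vecMulVec, vecMulVec_mul, vecMul_transpose, frame_mulVec_homog_zero,
    frame_mulVec_homog_zero, remainder, chartMatrix]

lemma remainder_mulVec_homog (M : a → b → ℝ) (x : a → ℝ) (y : b → ℝ) :
    remainder M x y *ᵥ homog y = 0 := by
  ext (i | i) <;> rw [mulVec_homog_apply, remainder_eq_fromBlocks]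
  · simp [dotProduct_mulVec, ← dotProduct.eq_1]
  · simp [mulVec, dotProduct]

lemma homog_vecMul_remainder (M : a → b → ℝ) (x : a → ℝ) (y : b → ℝ) :
    homog x ᵥ* remainder M x y = 0 := by
  ext (j | j) <;> rw [homog_vecMul_apply, remainder_eq_fromBlocks]
  · simp [dotProduct]
  · simp [vecMul, dotProduct]

lemma eq_remainder {Z : Matrix (Unit ⊕ a) (Unit ⊕ b) ℝ} {x : a → ℝ} {y : b → ℝ}
    (hy : Z *ᵥ homog y = 0) (hx : homog x ᵥ* Z = 0) :
    Z = remainder (fun i j ↦ Z (.inr i) (.inr j)) x y := by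
  have col (i) : Z i (.inl ()) = -∑ j, Z i (.inr j) * y j :=
    eq_neg_of_add_eq_zero_left ((mulVec_homog_apply Z y i).symm.trans (congr_fun hy i))
  have row (j) : Z (.inl ()) j = -∑ i, x i * Z (.inr i) j :=
    eq_neg_of_add_eq_zero_left ((homog_vecMul_apply x Z j).symm.trans (congr_fun hx j))
  rw [remainder_eq_fromBlocks]
  ext (i | i) (j | j)
  · rw [row]
    simp [col, dotProduct, mulVec]
  · rw [row]
    simp [vecMul, dotProduct]
  · rw [col]
    simp [mulVec, dotProduct]
  · rfl

lemma isRankOneSplit_chartMatrix {q : Param a b}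
    (hq : ‖remainder q.1.2 q.2.1 q.2.2‖ ≤ scale q.2.1 q.2.2 * |q.1.1|) :
    IsRankOneSplit (chartMatrix q) (remainder q.1.2 q.2.1 q.2.2) (chartLeft q)
      (chartRight q) where
  eq_add := by rw [vecMulVec_chartLeft_chartRight, chartMatrix_eq_add]
  dotProduct_self_right := chartRight_dotProduct_self q
  mulVec_eq_zero := by rw [chartRight, mulVec_smul, remainder_mulVec_homog, smul_zero]
  vecMul_eq_zero := by rw [chartLeft, smul_vecMul, homog_vecMul_remainder, smul_zero]
  norm_sq_le := by
    rw [chartLeft_dotProduct_self]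
    exact pow_le_pow_left₀ (norm_nonneg _) hq 2

/-- The parameters at which the rank-one summand of `chartMatrix` strictly dominates the
remainder. -/
def chartDomain (a b : Type*) [Fintype a] [Fintype b] [DecidableEq a] [DecidableEq b] :
    Set (Param a b) :=
  {q | ‖remainder q.1.2 q.2.1 q.2.2‖ < scale q.2.1 q.2.2 * |q.1.1|}

lemma ne_zero_of_mem_chartDomain {q : Param a b} (hq : q ∈ chartDomain a b) : q.1.1 ≠ 0 := by
  intro hs
  have := (norm_nonneg _).trans_lt hq
  simp [hs] at this

lemma IsRankOneSplit.eq_of_mem_chartDomain {q : Param a b} {Z : Matrix (Unit ⊕ a) (Unit ⊕ b) ℝ}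
    {u : Unit ⊕ a → ℝ} {v : Unit ⊕ b → ℝ} (h : IsRankOneSplit (chartMatrix q) Z u v)
    (hq : q ∈ chartDomain a b) :
    vecMulVec u v = q.1.1 • vecMulVec (homog q.2.1) (homog q.2.2) ∧
      Z = remainder q.1.2 q.2.1 q.2.2 := by
  rw [← vecMulVec_chartLeft_chartRight]
  refine (isRankOneSplit_chartMatrix (mem_ofPred_eq ▸ hq).le).unique ?_ h
  rw [chartLeft_dotProduct_self]
  exact pow_lt_pow_left₀ hq (norm_nonneg _) two_ne_zero

lemma injOn_chart : InjOn chart (chartDomain a b) := by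
  intro q hq q' hq' hqq'
  have split := isRankOneSplit_chartMatrix (mem_ofPred_eq ▸ hq').le
  rw [← blockEquiv.symm.injective hqq'] at split
  obtain ⟨rank_one, rem⟩ := split.eq_of_mem_chartDomain hq
  rw [vecMulVec_chartLeft_chartRight] at rank_one
  have hs : q'.1.1 = q.1.1 := by
    simpa [homog, vecMulVec_apply] using congr_fun₂ rank_one (.inl ()) (.inl ())
  have cancel {t t' : ℝ} (h : q'.1.1 * t' = q.1.1 * t) : t = t' :=
    (mul_left_cancel₀ (ne_zero_of_mem_chartDomain hq) (hs ▸ h)).symm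
  refine Prod.ext (Prod.ext hs.symm ?_) (Prod.ext (funext fun i ↦ ?_) (funext fun j ↦ ?_))
  · rw [remainder_eq_fromBlocks, remainder_eq_fromBlocks] at rem
    exact (fromBlocks_inj.1 rem).2.2.2.symm
  · exact cancel (by
      simpa [homog, vecMulVec_apply] using congr_fun₂ rank_one (.inr i) (.inl ()))
  · exact cancel (by
      simpa [homog, vecMulVec_apply] using congr_fun₂ rank_one (.inl ()) (.inr j))

lemma IsRankOneSplit.exists_chartMatrix_eq {Y Z : Matrix (Unit ⊕ a) (Unit ⊕ b) ℝ}
    {u : Unit ⊕ a → ℝ} {v : Unit ⊕ b → ℝ} (h : IsRankOneSplit Y Z u v)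
    (hu : u (.inl ()) ≠ 0) (hv : v (.inl ()) ≠ 0) :
    ∃ q : Param a b, chartMatrix q = Y ∧ u = u (.inl ()) • homog q.2.1 ∧
      v = v (.inl ()) • homog q.2.2 ∧
      ‖remainder q.1.2 q.2.1 q.2.2‖ ≤ scale q.2.1 q.2.2 * |q.1.1| := by
  set x : a → ℝ := fun i ↦ u (.inr i) / u (.inl ())
  set y : b → ℝ := fun j ↦ v (.inr j) / v (.inl ())
  have hx : u = u (.inl ()) • homog x := (smul_homog_div hu).symm
  have hy : v = v (.inl ()) • homog y := (smul_homog_div hv).symm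
  obtain ⟨M, rfl⟩ : ∃ M, Z = remainder M x y := by
    have right := h.mulVec_eq_zero
    have left := h.vecMul_eq_zero
    rw [hy, mulVec_smul] at right
    rw [hx, smul_vecMul] at left
    exact ⟨_, eq_remainder ((smul_eq_zero.1 right).resolve_left hv)
      ((smul_eq_zero.1 left).resolve_left hu)⟩
  refine ⟨((u (.inl ()) * v (.inl ()), M), (x, y)), ?_, hx, hy, ?_⟩
  · rw [h.eq_add]
    refine (chartMatrix_eq_add _).trans (congrArg (· + remainder M x y) ?_)
    rw [← smul_smul, ← vecMulVec_smul, ← smul_vecMulVec]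
    exact congrArg₂ vecMulVec hx.symm hy.symm
  · have unit : v (.inl ()) * (v (.inl ()) * (1 + y ⬝ᵥ y)) = 1 := by
      rw [← homog_dotProduct_self, ← smul_eq_mul, ← smul_eq_mul, ← dotProduct_smul,
        ← smul_dotProduct, ← hy, h.dotProduct_self_right]
    refine (sq_le_sq₀ (norm_nonneg _) (mul_nonneg (scale_pos x y).le (abs_nonneg _))).1 ?_
    refine h.norm_sq_le.trans_eq ?_
    nth_rw 1 2 [hx]
    rw [mul_pow, scale_sq, sq_abs, smul_dotProduct, dotProduct_smul, homog_dotProduct_self,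
      smul_eq_mul, smul_eq_mul]
    linear_combination (-u (.inl ()) ^ 2 * (1 + x ⬝ᵥ x)) * unit

lemma charpoly_transpose_remainder_mul_remainder (M : a → b → ℝ) (x : a → ℝ) (y : b → ℝ) :
    ((remainder M x y)ᵀ * remainder M x y).charpoly =
      Polynomial.X * (remainderGram M x y).charpoly := by
  have gram_core : (remainder M x y)ᵀ * remainder M x y =
      frame y * ((core (0, M))ᵀ * ((frame x)ᵀ * frame x) * core (0, M) * (frame y)ᵀ) := by
    simp only [remainder, chartMatrix, transpose_mul, transpose_transpose, Matrix.mul_assoc]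
  have blocks : (core (0, M))ᵀ * ((frame x)ᵀ * frame x) * core (0, M) * (frame y)ᵀ * frame y =
      fromBlocks 0 0 0 ((of M)ᵀ * gram x * of M * gram y) := by
    rw [Matrix.mul_assoc _ (frame y)ᵀ, transpose_frame_mul_frame, transpose_frame_mul_frame]
    simp [core, fromBlocks_multiply, fromBlocks_transpose]
  have cyclic : (remainderGram M x y).charpoly =
      ((of M)ᵀ * gram x * of M * gram y).charpoly := by
    rw [remainderGram, Matrix.mul_assoc, charpoly_mul_comm]
    simp only [Matrix.mul_assoc]
  rw [gram_core, charpoly_mul_comm, blocks, charpoly_fromBlocks_zero₁₂, cyclic]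
  simp

end ChartSplit

section Statistic

open scoped Matrix.Norms.L2Operator

lemma trace_vecMulVec_mul_transpose {m n : Type*} [Fintype m] [Fintype n] (u : m → ℝ) (v : n → ℝ)
    (A : Matrix m n ℝ) : (vecMulVec u v * Aᵀ).trace = u ⬝ᵥ A *ᵥ v := by
  rw [vecMulVec_mul, trace_vecMulVec, vecMul_transpose]

lemma eval_charpoly_transpose_mul_self_pos {m n : Type*} [Fintype m] [Fintype n] [DecidableEq n]
    {Z : Matrix m n ℝ} {z : ℝ} (hz : ‖Z‖ < z) : 0 < (Zᵀ * Z).charpoly.eval (z ^ 2) := by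
  rw [eval_charpoly]
  refine PosDef.det_pos (.of_dotProduct_mulVec_pos ?_ fun w hw ↦ ?_)
  · rw [IsHermitian, conjTranspose_eq_transpose_of_trivial, transpose_sub, transpose_mul,
      transpose_transpose, scalar_apply, diagonal_transpose]
  · have hw' : 0 < w ⬝ᵥ w := by simpa using dotProduct_star_self_pos_iff.2 hw
    have form : star w ⬝ᵥ (scalar n (z ^ 2) - Zᵀ * Z) *ᵥ w =
        z ^ 2 * (w ⬝ᵥ w) - (Z *ᵥ w) ⬝ᵥ (Z *ᵥ w) := by
      rw [sub_mulVec, dotProduct_sub, star_trivial, ← mulVec_mulVec, dotProduct_mulVec w Zᵀ,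
        vecMul_transpose, scalar_apply, ← smul_one_eq_diagonal, smul_mulVec, one_mulVec,
        dotProduct_smul, smul_eq_mul]
    rw [form, sub_pos]
    exact (dotProduct_self_mulVec_le Z w).trans_lt
      (mul_lt_mul_of_pos_right (pow_lt_pow_left₀ hz (norm_nonneg Z) two_ne_zero) hw')

/-- The statistic `S_{1,l}`, for singular values `d` with largest value `d o` and with `k` in the
place of `N - p`. Its denominator has as lower limit the second largest singular value. -/
noncomputable def kacRiceStatistic {r : Type*} [Fintype r] [DecidableEq r] (σ l : ℝ) (k : ℕ)
    (d : r → ℝ) (o : r) : ℝ :=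
  (∫ z in Ioi (d o), Real.exp (-(z - l) ^ 2 / (2 * σ ^ 2)) * z ^ k *
      ∏ j ∈ Finset.univ.erase o, (z ^ 2 - d j ^ 2)) /
    ∫ z in {z : ℝ | 0 < z ∧ ∀ j, j ≠ o → d j < z}, Real.exp (-(z - l) ^ 2 / (2 * σ ^ 2)) * z ^ k *
      ∏ j ∈ Finset.univ.erase o, (z ^ 2 - d j ^ 2)

lemma IsSVD.kacRiceStatistic_eq_tailRatio {m n r : Type*} [Fintype m] [Fintype n] [Fintype r]
    [DecidableEq r] {Y : Matrix m n ℝ} {U : Matrix m r ℝ} {d : r → ℝ} {V : Matrix n r ℝ} {o : r}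
    (h : IsSVD Y U d V o) (σ l : ℝ) (k : ℕ) :
    kacRiceStatistic σ l k d o = tailRatio (kacRiceWeight σ l k
      (∏ j ∈ Finset.univ.erase o, (.X - .C (d j ^ 2)))) ‖Function.update d o 0‖ (d o) := by
  have limit : {z : ℝ | 0 < z ∧ ∀ j, j ≠ o → d j < z} = Ioi ‖Function.update d o 0‖ :=
    Set.ext fun z ↦ (h.norm_update_lt_iff z).symm
  simp only [kacRiceStatistic, tailRatio, kacRiceWeight, Polynomial.eval_prod,
    Polynomial.eval_sub, Polynomial.eval_X, Polynomial.eval_C, limit]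

variable {a b : Type*} [Fintype a] [Fintype b]

/-- The value `uᵀ B v` at the unit vectors `u` and `v` in the directions `(1, x)` and `(1, y)`. -/
noncomputable def signal (B : Matrix (Unit ⊕ a) (Unit ⊕ b) ℝ) (x : a → ℝ) (y : b → ℝ) : ℝ :=
  (homog x ⬝ᵥ B *ᵥ homog y) / scale x y

variable [DecidableEq a] [DecidableEq b]

lemma eval_charpoly_remainderGram_pos {M : a → b → ℝ} {x : a → ℝ} {y : b → ℝ} {z : ℝ}
    (hz : ‖remainder M x y‖ < z) : 0 < (remainderGram M x y).charpoly.eval (z ^ 2) := by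
  have pos := eval_charpoly_transpose_mul_self_pos hz
  rw [charpoly_transpose_remainder_mul_remainder, Polynomial.eval_mul, Polynomial.eval_X] at pos
  exact pos_of_mul_pos_right pos (sq_nonneg z)

/-- The statistic `S_{1,Λ̃₁}` of `chartMatrix q`, in terms of the parameter `q`. -/
noncomputable def chartPivot (σ : ℝ) (B : Matrix (Unit ⊕ a) (Unit ⊕ b) ℝ) (q : Param a b) : ℝ :=
  tailRatio (kacRiceWeight σ (SignType.sign q.1.1 * signal B q.2.1 q.2.2)
      (Fintype.card a - Fintype.card b) (remainderGram q.1.2 q.2.1 q.2.2).charpoly)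
    ‖remainder q.1.2 q.2.1 q.2.2‖ (scale q.2.1 q.2.2 * |q.1.1|)

section SVD

variable {r : Type*} [Fintype r] [DecidableEq r] {U : Matrix (Unit ⊕ a) r ℝ} {d : r → ℝ}
  {V : Matrix (Unit ⊕ b) r ℝ} {o : r} {q : Param a b}

lemma IsSVD.smul_vecMulVec_col (h : IsSVD (chartMatrix q) U d V o) (hq : q ∈ chartDomain a b) :
    d o • vecMulVec (U.col o) (V.col o) = q.1.1 • vecMulVec (homog q.2.1) (homog q.2.2) := by
  rw [← smul_vecMulVec]
  exact (h.isRankOneSplit.eq_of_mem_chartDomain hq).1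

lemma IsSVD.eq_scale_mul_abs (h : IsSVD (chartMatrix q) U d V o) (hq : q ∈ chartDomain a b) :
    d o = scale q.2.1 q.2.2 * |q.1.1| := by
  have norms := congrArg (fun A ↦ (A * Aᵀ).trace) (h.smul_vecMulVec_col hq)
  simp only [transpose_smul, transpose_vecMulVec, Matrix.smul_mul, Matrix.mul_smul, smul_smul,
    vecMulVec_mul_vecMulVec, trace_smul, trace_vecMulVec, dotProduct_smul,
    h.col_left_dotProduct_self, h.col_right_dotProduct_self, homog_dotProduct_self,
    smul_eq_mul] at norms
  refine (sq_eq_sq₀ (h.nonneg o) (mul_nonneg (scale_pos _ _).le (abs_nonneg _))).1 ?_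
  rw [mul_pow, scale_sq, sq_abs]
  linear_combination norms

lemma IsSVD.col_dotProduct_mulVec_col (h : IsSVD (chartMatrix q) U d V o)
    (hq : q ∈ chartDomain a b) (B : Matrix (Unit ⊕ a) (Unit ⊕ b) ℝ) :
    U.col o ⬝ᵥ B *ᵥ V.col o = SignType.sign q.1.1 * signal B q.2.1 q.2.2 := by
  have trace_eq := congrArg (fun A ↦ (A * Bᵀ).trace) (h.smul_vecMulVec_col hq)
  simp only [Matrix.smul_mul, trace_smul, trace_vecMulVec_mul_transpose, smul_eq_mul]
    at trace_eq
  have hs := abs_pos.2 (ne_zero_of_mem_chartDomain hq)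
  have hκ := scale_pos q.2.1 q.2.2
  rw [h.eq_scale_mul_abs hq] at trace_eq
  nth_rw 2 [← sign_mul_abs q.1.1] at trace_eq
  rw [signal, mul_div_assoc', eq_div_iff hκ.ne']
  refine mul_left_cancel₀ hs.ne' ?_
  linear_combination trace_eq

lemma IsSVD.charpoly_remainderGram (h : IsSVD (chartMatrix q) U d V o) (hq : q ∈ chartDomain a b)
    (hcard : Fintype.card (Unit ⊕ b) = Fintype.card r) :
    (remainderGram q.1.2 q.2.1 q.2.2).charpoly =
      ∏ j ∈ Finset.univ.erase o, (Polynomial.X - Polynomial.C (d j ^ 2)) := by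
  have charpoly_eq := h.charpoly_transpose_mul_self_remainder hcard
  rw [(h.isRankOneSplit.eq_of_mem_chartDomain hq).2,
    charpoly_transpose_remainder_mul_remainder] at charpoly_eq
  exact mul_left_cancel₀ Polynomial.X_ne_zero charpoly_eq

lemma IsSVD.kacRiceStatistic_eq_chartPivot (h : IsSVD (chartMatrix q) U d V o)
    (hq : q ∈ chartDomain a b) (hcard : Fintype.card (Unit ⊕ b) = Fintype.card r) (σ : ℝ)
    (B : Matrix (Unit ⊕ a) (Unit ⊕ b) ℝ) :
    kacRiceStatistic σ (U.col o ⬝ᵥ B *ᵥ V.col o) (Fintype.card a - Fintype.card b) d o =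
      chartPivot σ B q := by
  rw [h.kacRiceStatistic_eq_tailRatio, h.col_dotProduct_mulVec_col hq, h.eq_scale_mul_abs hq,
    ← h.charpoly_remainderGram hq hcard, ← h.norm_remainder,
    (h.isRankOneSplit.eq_of_mem_chartDomain hq).2, chartPivot]

end SVD

end Statistic

section Fibre

open scoped Matrix.Norms.L2Operator

lemma sum_sq_smul_vecMulVec_add {m n : Type*} [Fintype m] [Fintype n] (s : ℝ) (u : m → ℝ)
    (v : n → ℝ) (A : Matrix m n ℝ) :
    ∑ i, ∑ j, (s • vecMulVec u v + A) i j ^ 2 =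
      s ^ 2 * ((u ⬝ᵥ u) * (v ⬝ᵥ v)) + 2 * s * (u ⬝ᵥ A *ᵥ v) + ∑ i, ∑ j, A i j ^ 2 := by
  have trace_sq (X : Matrix m n ℝ) : ∑ i, ∑ j, X i j ^ 2 = (X * Xᵀ).trace := by
    simp [trace, mul_apply, sq]
  have cross : (A * (vecMulVec u v)ᵀ).trace = u ⬝ᵥ A *ᵥ v := by
    rw [← trace_transpose, transpose_mul, transpose_transpose, trace_vecMulVec_mul_transpose]
  have rank_one : (vecMulVec u v * (vecMulVec u v)ᵀ).trace = (u ⬝ᵥ u) * (v ⬝ᵥ v) := by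
    rw [trace_vecMulVec_mul_transpose, vecMulVec_mulVec, op_smul_eq_smul, dotProduct_smul,
      smul_eq_mul, mul_comm]
  simp only [trace_sq, transpose_add, transpose_smul, Matrix.add_mul, Matrix.mul_add,
    Matrix.smul_mul, Matrix.mul_smul, trace_add, trace_smul, rank_one, cross,
    trace_vecMulVec_mul_transpose, smul_eq_mul]
  ring

variable {a b : Type*} [Fintype a] [Fintype b] [DecidableEq a] [DecidableEq b]

lemma sum_sq_chartMatrix_sub (B : Matrix (Unit ⊕ a) (Unit ⊕ b) ℝ) (q : Param a b) :
    ∑ i, ∑ j, (chartMatrix q i j - B i j) ^ 2 =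
      (scale q.2.1 q.2.2 * q.1.1 - signal B q.2.1 q.2.2) ^ 2 +
        (∑ i, ∑ j, (remainder q.1.2 q.2.1 q.2.2 i j - B i j) ^ 2 - signal B q.2.1 q.2.2 ^ 2) := by
  have cross : homog q.2.1 ⬝ᵥ (remainder q.1.2 q.2.1 q.2.2 - B) *ᵥ homog q.2.2 =
      -(scale q.2.1 q.2.2 * signal B q.2.1 q.2.2) := by
    rw [sub_mulVec, remainder_mulVec_homog, zero_sub, dotProduct_neg, signal,
      mul_div_cancel₀ _ (scale_pos q.2.1 q.2.2).ne']
  have square := sum_sq_smul_vecMulVec_add q.1.1 (homog q.2.1) (homog q.2.2)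
    (remainder q.1.2 q.2.1 q.2.2 - B)
  rw [← add_sub_assoc, ← chartMatrix_eq_add, cross, homog_dotProduct_self,
    homog_dotProduct_self, ← scale_sq] at square
  simp only [Matrix.sub_apply] at square
  linear_combination square

/-- The density, in the coordinates `q`, of the law of a Gaussian matrix with mean `B`, up to a
constant factor. -/
noncomputable def jacobianDensity (σ : ℝ) (B : Matrix (Unit ⊕ a) (Unit ⊕ b) ℝ) (q : Param a b) :
    ℝ≥0∞ :=
  ENNReal.ofReal |(fderiv ℝ chart q).det| *
    ENNReal.ofReal (gaussianMatrixDensity σ B (chartMatrix q))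

lemma exists_jacobianDensity_eq (hab : Fintype.card b ≤ Fintype.card a) (σ : ℝ)
    (B : Matrix (Unit ⊕ a) (Unit ⊕ b) ℝ) (M : a → b → ℝ) (x : a → ℝ) (y : b → ℝ) :
    ∃ C : ℝ, ∀ s : ℝ, ‖remainder M x y‖ < scale x y * |s| →
      jacobianDensity σ B ((s, M), (x, y)) = ENNReal.ofReal C * ENNReal.ofReal
        (kacRiceWeight σ (SignType.sign s * signal B x y) (Fintype.card a - Fintype.card b)
          (remainderGram M x y).charpoly (scale x y * |s|)) := by
  obtain ⟨c, hc⟩ := exists_abs_det_fderiv_chart_eq M x y hab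
  let offset := ∑ i, ∑ j, (remainder M x y i j - B i j) ^ 2 - signal B x y ^ 2
  refine ⟨c * Real.exp (-offset / (2 * σ ^ 2)), fun s hs ↦ ?_⟩
  have hs0 : s ≠ 0 := ne_zero_of_mem_chartDomain (q := ((s, M), (x, y))) hs
  have hQ := eval_charpoly_remainderGram_pos hs
  have sign_sq : (SignType.sign s : ℝ) * SignType.sign s = 1 := by
    rcases hs0.lt_or_gt with h | h <;> simp [h]
  have gap : (scale x y * |s| - SignType.sign s * signal B x y) ^ 2 =
      (scale x y * s - signal B x y) ^ 2 := by
    linear_combination (signal B x y ^ 2 - (scale x y * |s|) ^ 2) * sign_sq + scale x y *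
      (scale x y * (SignType.sign s * |s| + s) - 2 * signal B x y) * sign_mul_abs s
  have hweight : 0 ≤ kacRiceWeight σ (SignType.sign s * signal B x y)
      (Fintype.card a - Fintype.card b) (remainderGram M x y).charpoly (scale x y * |s|) :=
    mul_nonneg (mul_nonneg (Real.exp_nonneg _)
      (pow_nonneg (mul_nonneg (scale_pos x y).le (abs_nonneg s)) _)) hQ.le
  rw [jacobianDensity, ← ENNReal.ofReal_mul (abs_nonneg _), ← ENNReal.ofReal_mul' hweight, hc s hs0,
    abs_of_pos hQ, gaussianMatrixDensity, sum_sq_chartMatrix_sub, kacRiceWeight, gap, neg_add,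
    add_div, Real.exp_add]
  congr 1
  ring

lemma exists_setLIntegral_jacobianDensity_mul_comp_chartPivot
    (hab : Fintype.card b ≤ Fintype.card a)
    {σ : ℝ} (hσ : 0 < σ) (B : Matrix (Unit ⊕ a) (Unit ⊕ b) ℝ) (M : a → b → ℝ) (x : a → ℝ)
    (y : b → ℝ) : ∃ F : ℝ≥0∞, ∀ g : ℝ → ℝ≥0∞,
    ∫⁻ s in {s | ‖remainder M x y‖ < scale x y * |s|}, jacobianDensity σ B ((s, M), (x, y)) *
        g (chartPivot σ B ((s, M), (x, y))) = F * ∫⁻ u in Ioo 0 1, g u := by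
  obtain ⟨C, hC⟩ := exists_jacobianDensity_eq hab σ B M x y
  let w (ε : ℝ) : ℝ → ℝ := kacRiceWeight σ (ε * signal B x y)
    (Fintype.card a - Fintype.card b) (remainderGram M x y).charpoly
  have hw (ε : ℝ) (z : ℝ) (hz : z ∈ Ioi ‖remainder M x y‖) : 0 < w ε z :=
    mul_pos (mul_pos (Real.exp_pos _) (pow_pos ((norm_nonneg _).trans_lt hz) _))
      (eval_charpoly_remainderGram_pos hz)
  have hS : MeasurableSet {s : ℝ | ‖remainder M x y‖ < scale x y * |s|} :=
    (isOpen_lt continuous_const (by fun_prop)).measurableSet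
  refine ⟨ENNReal.ofReal C * (ENNReal.ofReal (scale x y)⁻¹ * ∑ ε ∈ {1, -1},
    ENNReal.ofReal (∫ z in Ioi ‖remainder M x y‖, w ε z)), fun g ↦ ?_⟩
  calc
    _ = ∫⁻ s in {s | ‖remainder M x y‖ < scale x y * |s|},
        ENNReal.ofReal C * (ENNReal.ofReal (w (SignType.sign s) (scale x y * |s|)) *
          g (tailRatio (w (SignType.sign s)) ‖remainder M x y‖ (scale x y * |s|))) :=
      setLIntegral_congr_fun hS fun s hs ↦ by rw [hC s hs, mul_assoc]; rfl
    _ = ENNReal.ofReal C * (ENNReal.ofReal (scale x y)⁻¹ * ∑ ε ∈ {1, -1},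
        ∫⁻ t in Ioi ‖remainder M x y‖, ENNReal.ofReal (w ε t) *
          g (tailRatio (w ε) ‖remainder M x y‖ t)) := by
      rw [← setLIntegral_sign_mul_abs (scale_pos x y) (norm_nonneg _) fun ε t ↦
        ENNReal.ofReal (w ε t) * g (tailRatio (w ε) ‖remainder M x y‖ t)]
      exact lintegral_const_mul' _ _ ofReal_ne_top
    _ = _ := by
      simp only [lintegral_Ioi_comp_tailRatio (continuous_kacRiceWeight ..)
        (integrable_kacRiceWeight hσ ..) (hw _), ← Finset.sum_mul, mul_assoc, w]

end Fibre

section Measurability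

open scoped Matrix.Norms.L2Operator

lemma measurable_integral_Ioi {X : Type*} [MeasurableSpace X] {w : X → ℝ → ℝ}
    (hw : Measurable fun p : X × ℝ ↦ w p.1 p.2) {t : X → ℝ} (ht : Measurable t) :
    Measurable fun x ↦ ∫ z in Ioi (t x), w x z := by
  have hS : MeasurableSet {p : X × ℝ | t p.1 < p.2} :=
    measurableSet_lt (ht.comp measurable_fst) measurable_snd
  have := (StronglyMeasurable.integral_prod_right' (ν := volume)
    (hw.indicator hS).stronglyMeasurable).measurable
  simpa only [← integral_indicator measurableSet_Ioi] using! this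

lemma measurable_coe_sign : Measurable fun s : ℝ ↦ (SignType.sign s : ℝ) := by
  have sign_eq (s : ℝ) : (SignType.sign s : ℝ) = s / |s| := by
    rcases lt_trichotomy s 0 with h | rfl | h
    · simp [h, abs_of_neg, h.ne]
    · simp
    · simp [h, abs_of_pos, h.ne']
  simp only [sign_eq]
  fun_prop

variable {a b : Type*}

lemma continuous_homog : Continuous (homog : (a → ℝ) → Unit ⊕ a → ℝ) :=
  continuous_pi fun i ↦ i.rec (fun _ ↦ continuous_const) fun i ↦ continuous_apply i

variable [Fintype a] [Fintype b]

@[fun_prop]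
lemma continuous_scale {X : Type*} [TopologicalSpace X] {x : X → a → ℝ} {y : X → b → ℝ}
    (hx : Continuous x) (hy : Continuous y) : Continuous fun t ↦ scale (x t) (y t) := by
  unfold scale dotProduct
  fun_prop

lemma continuous_signal (B : Matrix (Unit ⊕ a) (Unit ⊕ b) ℝ) :
    Continuous fun z : (a → ℝ) × (b → ℝ) ↦ signal B z.1 z.2 := by
  have hx : Continuous fun z : (a → ℝ) × (b → ℝ) ↦ homog z.1 := continuous_homog.comp continuous_fst
  have hy : Continuous fun z : (a → ℝ) × (b → ℝ) ↦ homog z.2 := continuous_homog.comp continuous_snd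
  exact (hx.dotProduct (continuous_const.matrix_mulVec hy)).div
    (continuous_scale continuous_fst continuous_snd) fun z ↦ (scale_pos z.1 z.2).ne'

variable [DecidableEq a] [DecidableEq b]

lemma continuous_chartMatrix :
    Continuous (chartMatrix : Param a b → Matrix (Unit ⊕ a) (Unit ⊕ b) ℝ) :=
  continuous_matrix fun i j ↦ (contDiff_chartMatrix_apply i j).continuous

lemma continuous_norm_remainder :
    Continuous fun q : Param a b ↦ ‖remainder q.1.2 q.2.1 q.2.2‖ := by
  unfold remainder
  exact (continuous_chartMatrix.comp (by fun_prop)).norm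

lemma isOpen_chartDomain : IsOpen (chartDomain a b) :=
  isOpen_lt continuous_norm_remainder (by fun_prop)

lemma continuous_eval_charpoly_remainderGram :
    Continuous fun p : Param a b × ℝ ↦
      (remainderGram p.1.1.2 p.1.2.1 p.1.2.2).charpoly.eval (p.2 ^ 2) := by
  simp only [eval_charpoly, remainderGram, gram, scalar_apply]
  refine Continuous.matrix_det ?_
  fun_prop

lemma measurable_chartPivot (σ : ℝ) (B : Matrix (Unit ⊕ a) (Unit ⊕ b) ℝ) :
    Measurable (chartPivot σ B) := by
  have sign_signal : Measurable fun q : Param a b ↦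
      SignType.sign q.1.1 * signal B q.2.1 q.2.2 :=
    (measurable_coe_sign.comp (by fun_prop)).mul
      ((continuous_signal B).measurable.comp measurable_snd)
  have weight : Measurable fun p : Param a b × ℝ ↦ kacRiceWeight σ
      (SignType.sign p.1.1.1 * signal B p.1.2.1 p.1.2.2) (Fintype.card a - Fintype.card b)
      (remainderGram p.1.1.2 p.1.2.1 p.1.2.2).charpoly p.2 := by
    have := sign_signal.comp (measurable_fst : Measurable (Prod.fst : Param a b × ℝ → Param a b))
    have := (continuous_eval_charpoly_remainderGram (a := a) (b := b)).measurable
    unfold kacRiceWeight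
    fun_prop
  refine (measurable_integral_Ioi weight ?_).div (measurable_integral_Ioi weight ?_)
  · exact Continuous.measurable (by fun_prop)
  · exact continuous_norm_remainder.measurable

lemma measurable_jacobianDensity (σ : ℝ) (B : Matrix (Unit ⊕ a) (Unit ⊕ b) ℝ) :
    Measurable (jacobianDensity σ B) := by
  refine .mul (.ennreal_ofReal ?_) (.ennreal_ofReal ?_)
  · exact (ContinuousLinearMap.continuous_det.comp
      (contDiff_chart.continuous_fderiv one_ne_zero)).abs.measurable
  · have entry i j : Continuous fun q : Param a b ↦ chartMatrix q i j :=
      (contDiff_chartMatrix_apply i j).continuous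
    unfold gaussianMatrixDensity
    fun_prop

end Measurability

section Exceptional

open scoped Matrix.Norms.L2Operator

lemma exists_ne_zero_swap_eq_smul_homog {a : Type*} [DecidableEq a] {w : Unit ⊕ a → ℝ}
    (hw : w ≠ 0) : ∃ i, w i ≠ 0 ∧ ∀ (c : ℝ) (x : a → ℝ),
      w ∘ Equiv.swap (.inl ()) i = c • homog x → (∀ l, x l ≠ 0) → i = .inl () := by
  by_cases h : w (.inl ()) = 0
  · obtain ⟨i | i, hi⟩ := Function.ne_iff.1 hw
    · exact absurd h hi
    · refine ⟨.inr i, hi, fun c x hx hx0 ↦ absurd ?_ (hx0 i)⟩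
      have hc : w (.inr i) = c := by simpa [homog] using congr_fun hx (.inl ())
      have hx0 : w (.inr i) = 0 ∨ x i = 0 := by simpa [h, homog, ← hc] using congr_fun hx (.inr i)
      exact hx0.resolve_left hi
  · exact ⟨_, h, fun _ _ _ _ ↦ rfl⟩

lemma IsRankOneSplit.eq_zero {m n : Type*} [Fintype m] [Fintype n] [DecidableEq n]
    {Y Z : Matrix m n ℝ} {v : n → ℝ} (h : IsRankOneSplit Y Z 0 v) : Y = 0 := by
  have hZ : ‖Z‖ ^ 2 ≤ 0 := h.norm_sq_le.trans_eq (zero_dotProduct 0)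
  rw [h.eq_add, norm_eq_zero.1 (pow_eq_zero_iff two_ne_zero |>.1 (hZ.antisymm (sq_nonneg _))),
    zero_vecMulVec, add_zero]

/-- The chart preceded by a permutation of the rows and columns of the matrix, which moves the pivot
of the homogeneous coordinates. -/
def permutedChart {a b : Type*} [Fintype a] [Fintype b] [DecidableEq a] [DecidableEq b]
    (e : Equiv.Perm (Unit ⊕ a)) (f : Equiv.Perm (Unit ⊕ b)) (q : Param a b) : Param a b :=
  blockEquiv.symm ((chartMatrix q).submatrix e f)

variable {a b : Type*} [Fintype a] [Fintype b] [DecidableEq a] [DecidableEq b]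

lemma contDiff_permutedChart (e : Equiv.Perm (Unit ⊕ a)) (f : Equiv.Perm (Unit ⊕ b)) :
    ContDiff ℝ 1 (permutedChart e f) := by
  refine ContDiff.prodMk (ContDiff.prodMk ?_ ?_) (ContDiff.prodMk ?_ ?_)
  · exact contDiff_chartMatrix_apply _ _
  · exact contDiff_pi.2 fun i ↦ contDiff_pi.2 fun j ↦ contDiff_chartMatrix_apply _ _
  · exact contDiff_pi.2 fun i ↦ contDiff_chartMatrix_apply _ _
  · exact contDiff_pi.2 fun j ↦ contDiff_chartMatrix_apply _ _

variable (a b) in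
/-- The parameters at which the largest singular value is repeated or one of the coordinates of the
two directions vanishes. -/
def exceptionalParam : Set (Param a b) :=
  {q | ‖remainder q.1.2 q.2.1 q.2.2‖ = scale q.2.1 q.2.2 * |q.1.1|} ∪
    ((⋃ i, {q | q.2.1 i = 0}) ∪ ⋃ j, {q | q.2.2 j = 0})

variable (a b) in
/-- The matrices, in block coordinates, with exceptional parameters in some permuted chart. -/
def exceptionalSet : Set (Param a b) :=
  ⋃ (e : Equiv.Perm (Unit ⊕ a)) (f : Equiv.Perm (Unit ⊕ b)),
    permutedChart e f '' exceptionalParam a b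

lemma zero_mem_exceptionalSet : (0 : Param a b) ∈ exceptionalSet a b := by
  have rem : remainder (0 : a → b → ℝ) 0 0 = 0 := by
    rw [remainder, show (((0, 0), (0, 0)) : Param a b) = 0 from rfl, chartMatrix, Prod.fst_zero,
      map_zero, Matrix.mul_zero, Matrix.zero_mul]
  refine mem_iUnion₂.2 ⟨1, 1, 0, Or.inl (by simp [rem]), ?_⟩
  rw [permutedChart, chartMatrix, Prod.fst_zero, map_zero, Matrix.mul_zero, Matrix.zero_mul]
  rfl

theorem IsSVD.mem_image_chart_or_mem_exceptionalSet {r : Type*} [Fintype r] [DecidableEq r]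
    {Y : Matrix (Unit ⊕ a) (Unit ⊕ b) ℝ} {U : Matrix (Unit ⊕ a) r ℝ} {d : r → ℝ}
    {V : Matrix (Unit ⊕ b) r ℝ} {o : r} (h : IsSVD Y U d V o) :
    blockEquiv.symm Y ∈ chart '' chartDomain a b ∨ blockEquiv.symm Y ∈ exceptionalSet a b := by
  by_cases hY : Y = 0
  · exact .inr (by simpa [hY] using zero_mem_exceptionalSet)
  refine or_iff_not_imp_right.2 fun hexc ↦ ?_
  have hd : d o • U.col o ≠ 0 := fun hu ↦ hY (hu ▸ h.isRankOneSplit).eq_zero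
  have hv : V.col o ≠ 0 := fun hv ↦ by simpa [hv] using h.col_right_dotProduct_self o
  obtain ⟨i, hi, pivot_row⟩ := exists_ne_zero_swap_eq_smul_homog hd
  obtain ⟨j, hj, pivot_col⟩ := exists_ne_zero_swap_eq_smul_homog hv
  obtain ⟨q, hq, hx, hy, hle⟩ := (h.submatrix (Equiv.swap (.inl ()) i)
    (Equiv.swap (.inl ()) j)).isRankOneSplit.exists_chartMatrix_eq
      (by simpa using hi) (by simpa using hj)
  have hchart : permutedChart (Equiv.swap (.inl ()) i) (Equiv.swap (.inl ()) j) q =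
      blockEquiv.symm Y := by
    rw [permutedChart, hq]
    congr 1
    ext
    simp
  have hgen : q ∉ exceptionalParam a b := fun hq ↦ hexc (mem_iUnion₂.2 ⟨_, _, q, hq, hchart⟩)
  simp only [exceptionalParam, mem_union, mem_iUnion, not_or, not_exists] at hgen
  obtain rfl := pivot_row _ _ hx hgen.2.1
  obtain rfl := pivot_col _ _ hy hgen.2.2
  exact ⟨q, hle.lt_of_ne hgen.1, by simpa [permutedChart, chart] using! hchart⟩

end Exceptional

section Integration

open scoped Matrix.Norms.L2Operator

variable {a b : Type*} [Fintype a] [Fintype b]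

instance : (volume : Measure (a → b → ℝ)).IsAddHaarMeasure :=
  Measure.pi.isAddHaarMeasure fun _ ↦ volume

instance : (volume : Measure (Param a b)).IsAddHaarMeasure :=
  have : (volume : Measure (ℝ × (a → b → ℝ))).IsAddHaarMeasure :=
    Measure.prod.instIsAddHaarMeasure volume volume
  have : (volume : Measure ((a → ℝ) × (b → ℝ))).IsAddHaarMeasure :=
    Measure.prod.instIsAddHaarMeasure volume volume
  Measure.prod.instIsAddHaarMeasure volume volume

lemma lintegral_param {f : Param a b → ℝ≥0∞} (hf : Measurable f) :
    ∫⁻ q, f q = ∫⁻ z : (a → ℝ) × (b → ℝ), ∫⁻ M : a → b → ℝ, ∫⁻ s : ℝ, f ((s, M), z) := by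
  refine (lintegral_prod_symm _ hf.aemeasurable).trans (lintegral_congr fun z ↦ ?_)
  exact lintegral_prod_symm _ (hf.comp (measurable_id.prodMk measurable_const)).aemeasurable

lemma finite_setOf_eq_mul_abs (r : ℝ) {c : ℝ} (hc : c ≠ 0) : {s : ℝ | r = c * |s|}.Finite := by
  refine (toFinite {r / c, -(r / c)}).subset fun s hs ↦ ?_
  have habs : |s| = r / c := eq_div_of_mul_eq hc ((mul_comm _ _).trans (Eq.symm hs))
  exact eq_or_eq_neg_of_abs_eq habs

variable [DecidableEq a] [DecidableEq b]

lemma volume_setOf_norm_remainder_eq :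
    volume {q : Param a b | ‖remainder q.1.2 q.2.1 q.2.2‖ = scale q.2.1 q.2.2 * |q.1.1|} = 0 := by
  have hS : MeasurableSet
      {q : Param a b | ‖remainder q.1.2 q.2.1 q.2.2‖ = scale q.2.1 q.2.2 * |q.1.1|} :=
    (isClosed_eq continuous_norm_remainder (by fun_prop)).measurableSet
  rw [← lintegral_indicator_one hS, lintegral_param (measurable_one.indicator hS)]
  have fibre (z : (a → ℝ) × (b → ℝ)) (M : a → b → ℝ) : ∫⁻ s : ℝ, indicator
      {q : Param a b | ‖remainder q.1.2 q.2.1 q.2.2‖ = scale q.2.1 q.2.2 * |q.1.1|} 1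
      ((s, M), z) = (0 : ℝ≥0∞) := by
    have hfin := finite_setOf_eq_mul_abs ‖remainder M z.1 z.2‖ (scale_pos z.1 z.2).ne'
    exact (lintegral_indicator_one hfin.measurableSet).trans (hfin.measure_zero volume)
  simp only [fibre, lintegral_zero]

lemma addHaar_setOf_apply_eq_zero {E : Type*} [NormedAddCommGroup E] [NormedSpace ℝ E]
    [MeasurableSpace E] [BorelSpace E] [FiniteDimensional ℝ E] (μ : Measure E) [μ.IsAddHaarMeasure]
    {φ : E →ₗ[ℝ] ℝ} (hφ : φ ≠ 0) : μ {q | φ q = 0} = 0 :=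
  Measure.addHaar_submodule μ φ.ker fun h ↦ hφ (LinearMap.ker_eq_top.1 h)

lemma volume_exceptionalParam : volume (exceptionalParam a b) = 0 := by
  refine measure_union_null volume_setOf_norm_remainder_eq (measure_union_null
    (measure_iUnion_null fun i ↦ ?_) (measure_iUnion_null fun j ↦ ?_))
  · refine addHaar_setOf_apply_eq_zero volume
      (φ := .proj i ∘ₗ .fst ℝ (a → ℝ) (b → ℝ) ∘ₗ .snd ℝ (ℝ × (a → b → ℝ)) _) fun h ↦ ?_
    simpa using DFunLike.congr_fun h ((0, 0), (1, 0))
  · refine addHaar_setOf_apply_eq_zero volume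
      (φ := .proj j ∘ₗ .snd ℝ (a → ℝ) (b → ℝ) ∘ₗ .snd ℝ (ℝ × (a → b → ℝ)) _) fun h ↦ ?_
    simpa using DFunLike.congr_fun h ((0, 0), (0, 1))

lemma volume_exceptionalSet : volume (exceptionalSet a b) = 0 :=
  measure_iUnion_null fun e ↦ measure_iUnion_null fun f ↦
    addHaar_image_eq_zero_of_differentiableOn_of_addHaar_eq_zero volume
      ((contDiff_permutedChart e f).differentiable one_ne_zero).differentiableOn
      volume_exceptionalParam

lemma lintegral_chartDomain_jacobianDensity_mul_comp (hab : Fintype.card b ≤ Fintype.card a) {σ : ℝ}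
    (hσ : 0 < σ) (B : Matrix (Unit ⊕ a) (Unit ⊕ b) ℝ) {g : ℝ → ℝ≥0∞} (hg : Measurable g)
    (hg_fin : ∫⁻ u in Ioo 0 1, g u ≠ ∞) :
    ∫⁻ q in chartDomain a b, jacobianDensity σ B q * g (chartPivot σ B q) =
      (∫⁻ q in chartDomain a b, jacobianDensity σ B q) * ∫⁻ u in Ioo 0 1, g u := by
  choose F hF using fun (z : (a → ℝ) × (b → ℝ)) (M : a → b → ℝ) ↦
    exists_setLIntegral_jacobianDensity_mul_comp_chartPivot hab hσ B M z.1 z.2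
  have fibres {g : ℝ → ℝ≥0∞} (hg : Measurable g) :
      ∫⁻ q in chartDomain a b, jacobianDensity σ B q * g (chartPivot σ B q) =
        ∫⁻ z, ∫⁻ M, F z M * ∫⁻ u in Ioo 0 1, g u := by
    have hS := (isOpen_chartDomain (a := a) (b := b)).measurableSet
    have integrand : Measurable fun q ↦ jacobianDensity σ B q * g (chartPivot σ B q) :=
      (measurable_jacobianDensity σ B).mul (hg.comp (measurable_chartPivot σ B))
    rw [← lintegral_indicator hS, lintegral_param (integrand.indicator hS)]
    refine lintegral_congr fun z ↦ lintegral_congr fun M ↦ ?_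
    rw [← hF z M g, ← lintegral_indicator
      (measurableSet_lt measurable_const (by fun_prop))]
    rfl
  have mass : ∫⁻ q in chartDomain a b, jacobianDensity σ B q = ∫⁻ z, ∫⁻ M, F z M := by
    simpa using fibres (measurable_const (a := 1))
  rw [fibres hg, mass]
  simp only [lintegral_mul_const' _ _ hg_fin]

lemma withDensity_gaussianMatrixDensity_image_chart (σ : ℝ) (B : Matrix (Unit ⊕ a) (Unit ⊕ b) ℝ)
    {S : Set (Param a b)} (hS : MeasurableSet S) (hS_sub : S ⊆ chartDomain a b) :
    (volume.withDensity fun q ↦ ENNReal.ofReal (gaussianMatrixDensity σ B (blockEquiv q)))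
      (chart '' S) = ∫⁻ q in S, jacobianDensity σ B q := by
  have deriv q (_ : q ∈ S) : HasFDerivWithinAt chart (fderiv ℝ chart q) S q :=
    (contDiff_chart.differentiable one_ne_zero q).hasFDerivAt.hasFDerivWithinAt
  have inj : InjOn chart S := injOn_chart.mono hS_sub
  rw [withDensity_apply _ (measurable_image_of_fderivWithin hS deriv inj),
    lintegral_image_eq_lintegral_abs_det_fderiv_mul volume hS deriv inj]
  simp only [chart, LinearEquiv.apply_symm_apply, jacobianDensity]

/-- The region of the parameter space on which the pivot takes values in `A`. -/
def pivotRegion (σ : ℝ) (B : Matrix (Unit ⊕ a) (Unit ⊕ b) ℝ) (A : Set ℝ) : Set (Param a b) :=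
  chartDomain a b ∩ chartPivot σ B ⁻¹' A

end Integration

section Uniformity

open scoped Matrix.Norms.L2Operator

section Chart

variable {a b : Type*} [Fintype a] [Fintype b] [DecidableEq a] [DecidableEq b]
  {B : Matrix (Unit ⊕ a) (Unit ⊕ b) ℝ} {σ : ℝ} {A : Set ℝ}

lemma measurableSet_pivotRegion (hA : MeasurableSet A) : MeasurableSet (pivotRegion σ B A) :=
  isOpen_chartDomain.measurableSet.inter (measurable_chartPivot σ B hA)

lemma measurableSet_image_chart {S : Set (Param a b)} (hS : MeasurableSet S)
    (hS_sub : S ⊆ chartDomain a b) : MeasurableSet (chart '' S) :=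
  hS.image_of_continuousOn_injOn contDiff_chart.continuous.continuousOn (injOn_chart.mono hS_sub)

lemma setLIntegral_pivotRegion_jacobianDensity (hab : Fintype.card b ≤ Fintype.card a)
    (hσ : 0 < σ) (hA : MeasurableSet A) :
    ∫⁻ q in pivotRegion σ B A, jacobianDensity σ B q =
      (∫⁻ q in chartDomain a b, jacobianDensity σ B q) * volume.restrict (Ioo 0 1) A := by
  have change := lintegral_chartDomain_jacobianDensity_mul_comp hab hσ B
    (measurable_one.indicator hA)
    (by rw [lintegral_indicator_one hA]; exact measure_ne_top _ _)
  rw [lintegral_indicator_one hA] at change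
  rw [← change, pivotRegion, inter_comm, ← setLIntegral_indicator (measurable_chartPivot σ B hA)]
  refine lintegral_congr fun q ↦ ?_
  by_cases hq : chartPivot σ B q ∈ A <;> simp [hq]

theorem measure_image_chart_pivotRegion (hab : Fintype.card b ≤ Fintype.card a) (hσ : 0 < σ)
    {μ : Measure (Param a b)} [IsProbabilityMeasure μ] {C : ℝ≥0∞}
    (hμ : μ = C • volume.withDensity fun q ↦
      ENNReal.ofReal (gaussianMatrixDensity σ B (blockEquiv q)))
    (hchart : ∀ᵐ q ∂μ, q ∈ chart '' chartDomain a b) (hA : MeasurableSet A) :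
    μ (chart '' pivotRegion σ B A) = volume.restrict (Ioo 0 1) A := by
  have image {A : Set ℝ} (hA : MeasurableSet A) : μ (chart '' pivotRegion σ B A) =
      C * (∫⁻ q in chartDomain a b, jacobianDensity σ B q) * volume.restrict (Ioo 0 1) A := by
    rw [hμ, Measure.smul_apply, smul_eq_mul, mul_assoc,
      withDensity_gaussianMatrixDensity_image_chart σ B (measurableSet_pivotRegion hA)
        inter_subset_left, setLIntegral_pivotRegion_jacobianDensity hab hσ hA]
  have mass : C * ∫⁻ q in chartDomain a b, jacobianDensity σ B q = 1 := by
    have total : μ (chart '' chartDomain a b) = 1 := by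
      rw [← measure_univ (μ := μ)]
      exact measure_congr (eventuallyEq_univ.2 hchart)
    simpa [pivotRegion, total] using (image .univ).symm
  rw [image hA, mass, one_mul]

end Chart

lemma map_withDensity_comp {α β : Type*} [MeasurableSpace α] [MeasurableSpace β] (μ : Measure α)
    {f : α → β} {g : β → ℝ≥0∞} (hf : Measurable f) (hg : Measurable g) :
    (μ.withDensity (g ∘ f)).map f = (μ.map f).withDensity g := by
  ext S hS
  rw [Measure.map_apply hf hS, withDensity_apply _ (hf hS), withDensity_apply _ hS,
    setLIntegral_map hS hg hf]
  rfl

lemma map_eq_of_preimage_ae_eq {α β : Type*} [MeasurableSpace α] [MeasurableSpace β]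
    [MeasurableSpace.CountablyGenerated β] {μ : Measure α} {ν : Measure β} {T : α → β}
    (h : ∀ A, MeasurableSet A →
      ∃ S, NullMeasurableSet S μ ∧ T ⁻¹' A =ᵐ[μ] S ∧ μ S = ν A) : μ.map T = ν := by
  have hT : AEMeasurable T μ := by
    refine NullMeasurable.aemeasurable fun A hA ↦ ?_
    obtain ⟨S, hS, hTS, -⟩ := h A hA
    exact hS.congr hTS.symm
  ext A hA
  obtain ⟨S, -, hTS, hμS⟩ := h A hA
  rw [Measure.map_apply_of_aemeasurable hT hA, measure_congr hTS, hμS]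

lemma gaussianMatrixDensity_submatrix {ι κ ι' κ' : Type*} [Fintype ι] [Fintype κ] [Fintype ι']
    [Fintype κ'] (σ : ℝ) (B Y : Matrix ι κ ℝ) (e : ι' ≃ ι) (f : κ' ≃ κ) :
    gaussianMatrixDensity σ (B.submatrix e f) (Y.submatrix e f) = gaussianMatrixDensity σ B Y := by
  have reindex : ∑ i, ∑ j, (Y (e i) (f j) - B (e i) (f j)) ^ 2 =
      ∑ i, ∑ j, (Y i j - B i j) ^ 2 := by
    rw [← e.sum_comp]
    exact Finset.sum_congr rfl fun i _ ↦ f.sum_comp fun j ↦ (Y (e i) j - B (e i) j) ^ 2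
  simp only [gaussianMatrixDensity, submatrix_apply, reindex]

section Transport

variable {a b ι κ : Type*} [Fintype ι] [Fintype κ]

/-- The block coordinates of a matrix after a relabelling of its rows and columns. -/
noncomputable def blockCoordinates (e : Unit ⊕ a ≃ ι) (f : Unit ⊕ b ≃ κ) :
    (ι → κ → ℝ) ≃L[ℝ] Param a b :=
  ((ofLinearEquiv ℝ).trans ((reindexLinearEquiv ℝ ℝ e.symm f.symm).trans
    blockEquiv.symm)).toContinuousLinearEquiv

variable (e : Unit ⊕ a ≃ ι) (f : Unit ⊕ b ≃ κ)

lemma blockEquiv_blockCoordinates (Y : ι → κ → ℝ) :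
    blockEquiv (blockCoordinates e f Y) = (of Y).submatrix e f :=
  blockEquiv.apply_symm_apply _

variable [Fintype a] [Fintype b]

lemma continuous_gaussianMatrixDensity_blockEquiv (σ : ℝ) (B : Matrix (Unit ⊕ a) (Unit ⊕ b) ℝ) :
    Continuous fun q ↦ gaussianMatrixDensity σ B (blockEquiv q) := by
  have entry i j : Continuous fun q : Param a b ↦ blockEquiv q i j :=
    (entryLinearMap ℝ ℝ i j ∘ₗ blockEquiv.toLinearMap).continuous_of_finiteDimensional
  unfold gaussianMatrixDensity
  fun_prop

lemma exists_map_blockCoordinates_eq {σ : ℝ} (hσ : 0 < σ) (B : Matrix ι κ ℝ) :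
    ∃ C : ℝ≥0∞, Measure.map (blockCoordinates e f) (Measure.pi fun i ↦ Measure.pi fun j ↦
        gaussianReal (B i j) ⟨σ ^ 2, sq_nonneg σ⟩) =
      C • volume.withDensity fun q ↦
        ENNReal.ofReal (gaussianMatrixDensity σ (B.submatrix e f) (blockEquiv q)) := by
  obtain ⟨C, hC⟩ := exists_pi_pi_gaussianReal_eq B hσ
  have haar := Measure.isAddLeftInvariant_eq_smul
    ((volume : Measure (ι → κ → ℝ)).map (blockCoordinates e f)) (volume : Measure (Param a b))
  have density : (fun Y ↦ ENNReal.ofReal (gaussianMatrixDensity σ B (of Y))) =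
      (fun q ↦ ENNReal.ofReal (gaussianMatrixDensity σ (B.submatrix e f) (blockEquiv q))) ∘
        blockCoordinates e f := by
    ext Y
    rw [Function.comp_apply, blockEquiv_blockCoordinates, gaussianMatrixDensity_submatrix]
  have hmeas := (continuous_gaussianMatrixDensity_blockEquiv σ (B.submatrix e f)).measurable
  rw [hC, Measure.map_smul, density, map_withDensity_comp _
    (blockCoordinates e f).continuous.measurable hmeas.ennreal_ofReal, haar, ENNReal.smul_def,
    withDensity_smul_measure]
  exact ⟨_, smul_smul _ _ _⟩

end Transport

section Law

variable {a b ι κ Ω : Type*} [Fintype ι] [Fintype κ] [DecidableEq κ] {σ : ℝ} {B : Matrix ι κ ℝ}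
  {o : κ} [MeasurableSpace Ω] {P : Measure Ω} {Y : Ω → ι → κ → ℝ} {U : Ω → Matrix ι κ ℝ}
  {d : Ω → κ → ℝ} {V : Ω → Matrix κ κ ℝ}

section Pivot

variable [Fintype a] [Fintype b] [DecidableEq a] [DecidableEq b]

lemma IsSVD.kacRiceStatistic_mem_iff {Y : ι → κ → ℝ} {U : Matrix ι κ ℝ} {d : κ → ℝ}
    {V : Matrix κ κ ℝ} (h : IsSVD (of Y) U d V o) (e : Unit ⊕ a ≃ ι) (f : Unit ⊕ b ≃ κ)
    (hY : blockCoordinates e f Y ∈ chart '' chartDomain a b) (A : Set ℝ) :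
    kacRiceStatistic σ (U.col o ⬝ᵥ B *ᵥ V.col o) (Fintype.card ι - Fintype.card κ) d o ∈ A ↔
      blockCoordinates e f Y ∈ chart '' pivotRegion σ (B.submatrix e f) A := by
  obtain ⟨q, hq, hqY⟩ := hY
  have hsub : chartMatrix q = (of Y).submatrix e f := by
    rw [← blockEquiv_blockCoordinates, ← hqY, chart, LinearEquiv.apply_symm_apply]
  have statistic := (hsub ▸ h.submatrix e f).kacRiceStatistic_eq_chartPivot hq
    (Fintype.card_congr f) σ (B.submatrix e f)
  have bilinear : (U.submatrix e id).col o ⬝ᵥ B.submatrix e f *ᵥ (V.submatrix f id).col o =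
      U.col o ⬝ᵥ B *ᵥ V.col o := by
    rw [submatrix_mulVec_equiv, show (U.submatrix e id).col o = U.col o ∘ e from rfl,
      comp_equiv_dotProduct_comp_equiv, show (V.submatrix f id).col o = V.col o ∘ f from rfl,
      Function.comp_assoc, f.self_comp_symm, Function.comp_id]
  have excess : Fintype.card a - Fintype.card b = Fintype.card ι - Fintype.card κ := by
    rw [← Fintype.card_congr e, ← Fintype.card_congr f, Fintype.card_sum, Fintype.card_sum,
      Nat.add_sub_add_left]
  rw [bilinear, excess] at statistic
  rw [statistic, ← hqY, pivotRegion, injOn_chart.mem_image_iff inter_subset_left hq]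
  exact ⟨fun hA ↦ ⟨hq, hA⟩, And.right⟩

lemma ae_blockCoordinates_mem_image_chart (e : Unit ⊕ a ≃ ι) (f : Unit ⊕ b ≃ κ)
    (hY : AEMeasurable Y P)
    (hac : P.map (fun ω ↦ blockCoordinates e f (Y ω)) ≪ volume)
    (hSVD : ∀ᵐ ω ∂P, IsSVD (of (Y ω)) (U ω) (d ω) (V ω) o) :
    ∀ᵐ ω ∂P, blockCoordinates e f (Y ω) ∈ chart '' chartDomain a b := by
  have hX := (blockCoordinates e f).continuous.measurable.comp_aemeasurable hY
  have generic := measure_eq_zero_iff_ae_notMem.1 (hac volume_exceptionalSet)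
  filter_upwards [hSVD, ae_of_ae_map hX generic] with ω h hexc
  exact (h.submatrix e f).mem_image_chart_or_mem_exceptionalSet.resolve_right hexc

end Pivot

theorem map_kacRiceStatistic_of_equiv [Finite a] [Finite b] [IsProbabilityMeasure P]
    (e : Unit ⊕ a ≃ ι) (f : Unit ⊕ b ≃ κ) (hσ : 0 < σ) (hY : AEMeasurable Y P)
    (hlaw : P.map Y = Measure.pi fun i ↦ Measure.pi fun j ↦
      gaussianReal (B i j) ⟨σ ^ 2, sq_nonneg σ⟩)
    (hSVD : ∀ᵐ ω ∂P, IsSVD (of (Y ω)) (U ω) (d ω) (V ω) o) :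
    P.map (fun ω ↦ kacRiceStatistic σ ((U ω).col o ⬝ᵥ B *ᵥ (V ω).col o)
      (Fintype.card ι - Fintype.card κ) (d ω) o) = volume.restrict (Ioo 0 1) := by
  classical
  cases nonempty_fintype a
  cases nonempty_fintype b
  have hX := (blockCoordinates e f).continuous.measurable.comp_aemeasurable hY
  obtain ⟨C, hC⟩ := exists_map_blockCoordinates_eq e f hσ B
  rw [← hlaw, AEMeasurable.map_map_of_aemeasurable
    (blockCoordinates e f).continuous.aemeasurable hY] at hC
  have hmem := ae_blockCoordinates_mem_image_chart e f hY
    (hC ▸ (withDensity_absolutelyContinuous _ _).smul_left C) hSVD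
  have hab : Fintype.card b ≤ Fintype.card a := by
    obtain ⟨ω, h⟩ := hSVD.exists
    simpa [← Fintype.card_congr e, ← Fintype.card_congr f] using h.card_le
  have := Measure.isProbabilityMeasure_map hX
  refine map_eq_of_preimage_ae_eq fun A hA ↦ ?_
  have hS : MeasurableSet (chart '' pivotRegion σ (B.submatrix e f) A) :=
    measurableSet_image_chart (measurableSet_pivotRegion hA) inter_subset_left
  refine ⟨_, hX.nullMeasurableSet_preimage hS, ?_, ?_⟩
  · filter_upwards [hSVD, hmem] with ω h hω
    exact propext (h.kacRiceStatistic_mem_iff e f hω A)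
  · rw [← Measure.map_apply_of_aemeasurable hX hS]
    have hdomain := measurableSet_image_chart
      (isOpen_chartDomain (a := a) (b := b)).measurableSet subset_rfl
    exact measure_image_chart_pivotRegion hab hσ hC ((ae_map_iff hX hdomain).2 hmem) hA

end Law

end Uniformity

end KacRice

theorem shifted_kac_rice_statistic_uniform_general {ι κ Ω : Type*} [Fintype ι] [Fintype κ]
    [DecidableEq κ] [MeasurableSpace Ω] {P : Measure Ω} [IsProbabilityMeasure P] {σ : ℝ}
    (hσ : 0 < σ) {B : Matrix ι κ ℝ} {Y : Ω → ι → κ → ℝ} {U : Ω → Matrix ι κ ℝ} {d : Ω → κ → ℝ}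
    {V : Ω → Matrix κ κ ℝ} {o : κ} (hY : AEMeasurable Y P)
    (hlaw : P.map Y = Measure.pi fun i ↦ Measure.pi fun j ↦
      gaussianReal (B i j) ⟨σ ^ 2, sq_nonneg σ⟩)
    (hSVD : ∀ᵐ ω ∂P, KacRice.IsSVD (of (Y ω)) (U ω) (d ω) (V ω) o) :
    P.map (fun ω ↦ KacRice.kacRiceStatistic σ ((U ω).col o ⬝ᵥ B *ᵥ (V ω).col o)
      (Fintype.card ι - Fintype.card κ) (d ω) o) = volume.restrict (Set.Ioo 0 1) := by
  obtain ⟨ω, h⟩ := hSVD.exists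
  have hκ : 0 < Fintype.card κ := Fintype.card_pos_iff.2 ⟨o⟩
  have hι : 0 < Fintype.card ι := hκ.trans_le h.card_le
  have e : Unit ⊕ Fin (Fintype.card ι - 1) ≃ ι := Fintype.equivOfCardEq (by simp; omega)
  have f : Unit ⊕ Fin (Fintype.card κ - 1) ≃ κ := Fintype.equivOfCardEq (by simp; omega)
  exact KacRice.map_kacRiceStatistic_of_equiv e f hσ hY hlaw hSVD

/-- **The pivot for the largest signal is uniform (Section 2.1.2).**
Model: `Y = B + E ∈ ℝ^{N×p}` (`N > p ≥ 1`) with i.i.d. `N(0,σ²)` noise entries; `Y = U D Vᵀ`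
a measurably chosen SVD with decreasing nonnegative singular values `d`.  Let
`Λ̃₁ = U₁ᵀ B V₁` (first columns of `U`, `V`).  Then
`S_{1,Λ̃₁} = (∫_{d₁}^∞ e^{-(z-Λ̃₁)²/(2σ²)} z^{N-p} ∏_{j=2}^p (z²-d_j²) dz) /
            (∫_{d₂}^∞ e^{-(z-Λ̃₁)²/(2σ²)} z^{N-p} ∏_{j=2}^p (z²-d_j²) dz)`
is uniform on `(0,1)`.  The lower limit `d₂` of the denominator is encoded (using `d ≥ 0`)
by the condition `0 < z ∧ ∀ j ≥ 1 (zero-based), d j < z`. -/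
theorem shifted_kac_rice_statistic_uniform
    (N p : ℕ) (hNp : p < N) (hp : 1 ≤ p)
    (σ : ℝ) (hσ : 0 < σ)
    (B : Matrix (Fin N) (Fin p) ℝ)
    {Ω : Type} [MeasurableSpace Ω] (P : Measure Ω) [IsProbabilityMeasure P]
    (Y U : Ω → Fin N → Fin p → ℝ) (V : Ω → Fin p → Fin p → ℝ) (d : Ω → Fin p → ℝ)
    (hYm : Measurable Y) (hUm : Measurable U) (hVm : Measurable V) (hdm : Measurable d)
    (hlaw : Measure.map Y P =
      Measure.pi (fun i : Fin N => Measure.pi (fun j : Fin p =>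
        gaussianReal (B i j) ⟨σ ^ 2, sq_nonneg σ⟩)))
    (hSVD : ∀ ω, Matrix.of (Y ω) =
      Matrix.of (U ω) * Matrix.diagonal (d ω) * (Matrix.of (V ω))ᵀ)
    (hUorth : ∀ ω, (Matrix.of (U ω))ᵀ * Matrix.of (U ω) = 1)
    (hVorth : ∀ ω, (Matrix.of (V ω))ᵀ * Matrix.of (V ω) = 1)
    (hanti : ∀ ω, Antitone (d ω))
    (hnonneg : ∀ ω i, 0 ≤ d ω i) :
    Measure.map (fun ω =>
      (∫ z in Set.Ioi (d ω ⟨0, by omega⟩),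
        Real.exp (-(z - ∑ i : Fin N, ∑ j : Fin p,
            U ω i ⟨0, by omega⟩ * B i j * V ω j ⟨0, by omega⟩) ^ 2 / (2 * σ ^ 2)) *
          z ^ (N - p) *
          ∏ j ∈ Finset.univ.erase (⟨0, by omega⟩ : Fin p), (z ^ 2 - d ω j ^ 2)) /
      (∫ z in {z : ℝ | 0 < z ∧ ∀ j : Fin p, 1 ≤ (j : ℕ) → d ω j < z},
        Real.exp (-(z - ∑ i : Fin N, ∑ j : Fin p,
            U ω i ⟨0, by omega⟩ * B i j * V ω j ⟨0, by omega⟩) ^ 2 / (2 * σ ^ 2)) *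
          z ^ (N - p) *
          ∏ j ∈ Finset.univ.erase (⟨0, by omega⟩ : Fin p), (z ^ 2 - d ω j ^ 2))) P
      = volume.restrict (Set.Ioo (0 : ℝ) 1) := by
  have hSVD' (ω : Ω) : KacRice.IsSVD (of (Y ω)) (of (U ω)) (d ω) (of (V ω)) ⟨0, hp⟩ :=
    ⟨hSVD ω, hUorth ω, hVorth ω, hnonneg ω, fun j ↦ hanti ω (Nat.zero_le j)⟩
  have bilinear (ω : Ω) : ∑ i, ∑ j, U ω i ⟨0, hp⟩ * B i j * V ω j ⟨0, hp⟩ =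
      (of (U ω)).col ⟨0, hp⟩ ⬝ᵥ B *ᵥ (of (V ω)).col ⟨0, hp⟩ := by
    simp [dotProduct, mulVec, Finset.mul_sum, mul_assoc]
  have uniform := shifted_kac_rice_statistic_uniform_general hσ hYm.aemeasurable hlaw
    (ae_of_all _ hSVD')
  simpa only [KacRice.kacRiceStatistic, Fintype.card_fin, ← bilinear, ne_eq, Fin.ext_iff,
    ← Nat.one_le_iff_ne_zero] using uniform
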